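/- If G is a 4-connected graph then either c ≥ 4δ − κ − 4, or every longest cycle in G is a dominating cycle. -/

import Mathlib

open SimpleGraph

variable {V : Type*}

/-- `G` is `k`-connected: more than `k` vertices and removing fewer than `k`
vertices leaves a connected graph. -/
def KConnected (G : SimpleGraph V) [Fintype V] (k : ℕ) : Prop :=
  k < Fintype.card V ∧
    ∀ S : Finset V, S.card < k → (G.induce ((↑S : Set V)ᶜ)).Connected

/-- vertex connectivity `κ`. -/
noncomputable def connectivity (G : SimpleGraph V) [Fintype V] : ℕ :=
  sSup {k | KConnected G k}

/-- independence number `α`. -/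
noncomputable def indepNumber (G : SimpleGraph V) [Fintype V] : ℕ :=
  sSup {k | ∃ s : Finset V, (∀ u ∈ s, ∀ v ∈ s, ¬ G.Adj u v) ∧ s.card = k}

/-- circumference `c`: length of a longest cycle. -/
noncomputable def circumference (G : SimpleGraph V) [Fintype V] : ℕ :=
  sSup {n | ∃ (v : V) (w : G.Walk v v), w.IsCycle ∧ w.length = n}

/-- `w` is a longest cycle of `G`. -/
def IsLongestCycle {G : SimpleGraph V} {v : V} (w : G.Walk v v) : Prop :=
  w.IsCycle ∧ ∀ (u : V) (w' : G.Walk u u), w'.IsCycle → w'.length ≤ w.length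

/-- dominating cycle: every edge has an endpoint on the cycle. -/
def IsDominatingCycle {G : SimpleGraph V} {v : V} (w : G.Walk v v) : Prop :=
  w.IsCycle ∧ ∀ x y, G.Adj x y → x ∈ w.support ∨ y ∈ w.support

/-- generalized cycle of length `n` with vertex set `W`: single vertices are
cycles of length 1, edges are cycles of length 2. -/
def ExtCycle (G : SimpleGraph V) (W : Set V) (n : ℕ) : Prop :=
  (n = 1 ∧ ∃ v : V, W = {v}) ∨
  (n = 2 ∧ ∃ u v : V, G.Adj u v ∧ W = {u, v}) ∨
  (3 ≤ n ∧ ∃ (v : V) (w : G.Walk v v), w.IsCycle ∧ w.length = n ∧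
      W = {x | x ∈ w.support})

/-- `p̄`: the length of a longest path in `G \ C`. -/
noncomputable def pathBar (G : SimpleGraph V) [Fintype V] {v : V} (w : G.Walk v v) : ℕ :=
  sSup {n | ∃ (a b : {x : V | x ∉ w.support})
      (p : (G.induce {x : V | x ∉ w.support}).Walk a b), p.IsPath ∧ p.length = n}

/-- `c̄`: the length of a longest (generalized) cycle in `G \ C`. -/
noncomputable def cycBar (G : SimpleGraph V) [Fintype V] {v : V} (w : G.Walk v v) : ℕ :=
  sSup {n | ∃ W, ExtCycle (G.induce {x : V | x ∉ w.support}) W n}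

/-- `CD_m`-cycle: every (generalized) cycle of length at least `m` meets `w`. -/
def IsCDCycle (G : SimpleGraph V) {v : V} (w : G.Walk v v) (m : ℕ) : Prop :=
  w.IsCycle ∧ ∀ (W : Set V) (n : ℕ), ExtCycle G W n → m ≤ n → ∃ x ∈ W, x ∈ w.support

/-- `L` lists the vertices of a path from `a` to `b`. -/
structure PL (G : SimpleGraph V) (a : V) (L : List V) (b : V) : Prop where
  hd : L.head? = some a
  lst : L.getLast? = some b
  ch : L.IsChain G.Adj
  nd : L.Nodup

theorem PL.single (G : SimpleGraph V) (a : V) : PL G a [a] a :=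
  ⟨rfl, rfl, by simp, by simp⟩

theorem PL.append {G : SimpleGraph V} {a b a' b' : V} {L L' : List V} (h : PL G a L b)
    (h' : PL G a' L' b') (hab : G.Adj b a') (hd : ∀ x ∈ L, x ∉ L') : PL G a (L ++ L') b' := by
  refine ⟨?_, ?_, ?_, ?_⟩
  · simp [List.head?_append, h.hd]
  · simp [List.getLast?_append, h'.lst]
  · rw [List.isChain_append]
    refine ⟨h.ch, h'.ch, ?_⟩
    intro x hx y hy
    rw [h.lst] at hx; rw [h'.hd] at hy
    simp at hx hy; subst hx; subst hy; exact hab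
  · rw [List.nodup_append']
    exact ⟨h.nd, h'.nd, fun x hx hx' => hd x hx hx'⟩

theorem PL.reverse {G : SimpleGraph V} {a b : V} {L : List V} (h : PL G a L b) :
    PL G b L.reverse a := by
  refine ⟨?_, ?_, ?_, ?_⟩
  · simp [h.lst]
  · simp [h.hd]
  · rw [List.isChain_reverse]
    exact h.ch.imp (fun _ _ h => h.symm)
  · simpa using h.nd

theorem PL.left_mem {G : SimpleGraph V} {a b : V} {L : List V} (h : PL G a L b) : a ∈ L :=
  List.mem_of_mem_head? (by simp [h.hd])

theorem PL.right_mem {G : SimpleGraph V} {a b : V} {L : List V} (h : PL G a L b) : b ∈ L :=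
  List.mem_of_getLast? h.lst

theorem PL.length_pos {G : SimpleGraph V} {a b : V} {L : List V} (h : PL G a L b) :
    1 ≤ L.length := List.length_pos_of_mem h.left_mem

/-- `R` is the (possibly empty) interior of a path from `u` to `v`. -/
def Lk (G : SimpleGraph V) (u : V) (R : List V) (v : V) : Prop :=
  (R = [] ∧ G.Adj u v) ∨ ∃ p q, PL G p R q ∧ G.Adj u p ∧ G.Adj q v

theorem Lk.symm {G : SimpleGraph V} {u v : V} {R : List V} (h : Lk G u R v) :
    Lk G v R.reverse u := by
  rcases h with ⟨h, h'⟩ | ⟨p, q, h1, h2, h3⟩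
  · left; exact ⟨by simp [h], h'.symm⟩
  · right; exact ⟨q, p, h1.reverse, h3.symm, h2.symm⟩

theorem Lk.join {G : SimpleGraph V} {a u v b : V} {L R L' : List V} (h : PL G a L u)
    (hk : Lk G u R v) (h' : PL G v L' b) (h1 : ∀ x ∈ L, x ∉ R) (h2 : ∀ x ∈ L, x ∉ L')
    (h3 : ∀ x ∈ R, x ∉ L') : PL G a (L ++ R ++ L') b := by
  rcases hk with ⟨rfl, hk⟩ | ⟨p, q, hp, hu, hv⟩
  · simpa using h.append h' hk h2
  · refine (h.append hp hu h1).append h' hv ?_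
    intro x hx
    rcases List.mem_append.1 hx with hx | hx
    · exact h2 x hx
    · exact h3 x hx

/-- a longest cycle, given as a periodic sequence of vertices. -/
structure LC (G : SimpleGraph V) (f : ℕ → V) (c : ℕ) : Prop where
  per : ∀ i, f (i + c) = f i
  inj : ∀ i j, i < c → j < c → f i = f j → i = j
  adj : ∀ i, G.Adj (f i) (f (i + 1))
  three : 3 ≤ c
  long : ∀ (a b : V) (L : List V), PL G a L b → G.Adj b a → 3 ≤ L.length → L.length ≤ c

namespace LC
variable {G : SimpleGraph V} {f : ℕ → V} {c : ℕ}

theorem mod (h : LC G f c) (i : ℕ) : f (i % c) = f i := by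
  have key : ∀ q r, f (r + q * c) = f r := by
    intro q
    induction q with
    | zero => simp
    | succ q ih => intro r; rw [Nat.succ_mul, ← add_assoc, h.per, ih]
  conv_rhs => rw [← Nat.mod_add_div i c, mul_comm]
  exact (key _ _).symm

theorem inj' (h : LC G f c) {i j : ℕ} (hij : i ≤ j) (hj : j < i + c) (he : f i = f j) : i = j := by
  have h3 := h.three
  have := h.inj (i % c) (j % c) (Nat.mod_lt _ (by omega)) (Nat.mod_lt _ (by omega))
    (by rw [h.mod, h.mod, he])
  have h2 : i ≡ j [MOD c] := this
  have h4 := (Nat.modEq_iff_dvd' hij).1 h2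
  have h5 := Nat.eq_zero_of_dvd_of_lt h4 (by omega)
  omega

theorem seg (h : LC G f c) (i k : ℕ) (hk : 1 ≤ k) (hkc : k ≤ c) :
    PL G (f i) ((List.range' i k).map f) (f (i + k - 1)) := by
  refine ⟨?_, ?_, ?_, ?_⟩
  · obtain ⟨k, rfl⟩ : ∃ m, k = m + 1 := ⟨k - 1, by omega⟩
    simp [List.range'_succ]
  · obtain ⟨k, rfl⟩ : ∃ m, k = m + 1 := ⟨k - 1, by omega⟩
    rw [List.range'_concat]
    simp
  · rw [List.isChain_map]
    have := List.isChain_range' i k 1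
    refine this.imp ?_
    intro a b hab
    subst hab
    exact h.adj a
  · refine List.Nodup.map_on ?_ (List.nodup_range')
    intro x hx y hy hxy
    simp at hx hy
    rcases le_total x y with hl | hl
    · exact h.inj' hl (by omega) hxy
    · exact (h.inj' hl (by omega) hxy.symm).symm

theorem close (h : LC G f c) {v u : V} {L R : List V} (hL : PL G v L u) (hk : Lk G u R v)
    (hd : ∀ x ∈ L, x ∉ R) (h3 : 3 ≤ L.length + R.length) : L.length + R.length ≤ c := by
  rcases hk with ⟨rfl, hk⟩ | ⟨p, q, hp, hu, hv⟩
  · simpa using h.long v u L hL hk (by simpa using h3)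
  · have := h.long v q (L ++ R) (hL.append hp hu hd) hv (by simpa using h3)
    simpa using this

/-- a chord through the outside spans at least its length. -/
theorem L1 (h : LC G f c) {i k : ℕ} {R : List V} (hk : 0 < k) (hkc : k < c)
    (hl : Lk G (f i) R (f (i + k))) (hR : ∀ r ∈ R, ∀ j, f j ≠ r) : R.length + 1 ≤ k := by
  have hs := h.seg (i + k) (c - k + 1) (by omega) (by omega)
  have e : i + k + (c - k + 1) - 1 = i + c := by omega
  rw [e, h.per] at hs
  by_cases h0 : R.length = 0
  · omega
  have := h.close hs hl (by
    intro x hx hx'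
    obtain ⟨j, _, hj⟩ := List.mem_map.1 hx
    exact hR x hx' j hj) (by simp; omega)
  simp at this
  omega

/-- crossing chords. -/
theorem L2 (h : LC G f c) {i s a b : ℕ} {R R2 : List V} (ha : 1 ≤ a) (has : a ≤ s) (hb : 1 ≤ b)
    (hsb : s + b < c) (hl : Lk G (f i) R (f (i + s))) (hl2 : Lk G (f (i + a)) R2 (f (i + s + b)))
    (hR : ∀ r ∈ R, ∀ j, f j ≠ r) (hR2 : ∀ r ∈ R2, ∀ j, f j ≠ r) (hd : ∀ r ∈ R, r ∉ R2) :
    R.length + R2.length + 2 ≤ a + b := by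
  have hs := h.seg (i + s + b) (c - s - b + 1) (by omega) (by omega)
  have e : i + s + b + (c - s - b + 1) - 1 = i + c := by omega
  rw [e, h.per] at hs
  have hs2 := (h.seg (i + a) (s - a + 1) (by omega) (by omega)).reverse
  have e2 : i + a + (s - a + 1) - 1 = i + s := by omega
  rw [e2] at hs2
  have hj := hl.join hs hs2 (by
    intro x hx hx'
    obtain ⟨j, _, hj⟩ := List.mem_map.1 hx
    exact hR x hx' j hj) (by
    intro x hx hx'
    rw [List.mem_reverse] at hx'
    obtain ⟨j, hj, hj'⟩ := List.mem_map.1 hx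
    obtain ⟨l, hl, hl'⟩ := List.mem_map.1 hx'
    simp at hj hl
    have := h.inj' (i := l) (j := j) (by omega) (by omega) (by rw [hj', hl'])
    omega) (by
    intro x hx hx'
    rw [List.mem_reverse] at hx'
    obtain ⟨l, hl, hl'⟩ := List.mem_map.1 hx'
    exact hR x hx l hl')
  have := h.close hj hl2 (by
    intro x hx hx'
    simp only [List.mem_append, List.mem_reverse, List.mem_map] at hx
    rcases hx with (⟨l, _, hl⟩ | hx) | ⟨l, _, hl⟩
    · exact hR2 x hx' l hl
    · exact hd x hx hx'
    · exact hR2 x hx' l hl) (by simp; omega)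
  simp at this
  omega

end LC

theorem PL.walk {G : SimpleGraph V} {b : V} {L : List V} : ∀ {a : V}, PL G a L b →
    ∃ w : G.Walk a b, w.support = L := by
  induction L with
  | nil => intro a h; have := h.hd; simp at this
  | cons x L ih =>
    intro a h
    have hx := h.hd
    simp at hx
    subst hx
    cases L with
    | nil =>
      have := h.lst
      simp at this
      subst this
      exact ⟨Walk.nil, by simp⟩
    | cons y L =>
      have hc := h.ch
      rw [List.isChain_cons_cons] at hc
      obtain ⟨w, hw⟩ := ih (a := y) ⟨rfl, by simpa using h.lst, hc.2, (List.nodup_cons.1 h.nd).2⟩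
      exact ⟨Walk.cons hc.1 w, by simp [hw]⟩

theorem PL.cycle {G : SimpleGraph V} {a b : V} {L : List V} (h : PL G a L b) (hab : G.Adj b a)
    (h3 : 3 ≤ L.length) : ∃ w : G.Walk b b, w.IsCycle ∧ w.length = L.length := by
  obtain ⟨w, hw⟩ := h.walk
  have hl : w.length + 1 = L.length := by rw [← hw, Walk.length_support]
  have hp : w.IsPath := by rw [Walk.isPath_def, hw]; exact h.nd
  refine ⟨Walk.cons hab w, ?_, by simpa using hl⟩
  rw [Walk.cons_isCycle_iff]
  refine ⟨hp, ?_⟩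
  intro he
  cases w with
  | nil => simp at hl; omega
  | cons hv q =>
    rename_i v
    rw [Walk.cons_isPath_iff] at hp
    rw [Walk.edges_cons, List.mem_cons] at he
    rcases he with he | he
    · rw [Sym2.eq_swap, Sym2.eq_iff] at he
      rcases he with ⟨_, he⟩ | ⟨he, he'⟩
      · subst he
        have := Walk.isPath_iff_eq_nil.1 hp.1
        subst this
        simp at hl; omega
      · exact hab.ne he'
    · exact hp.2 (Walk.snd_mem_support_of_mem_edges _ he)

theorem exists_LC {G : SimpleGraph V} {v : V} (w : G.Walk v v) (hc : w.IsCycle)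
    (hl : ∀ (u : V) (w' : G.Walk u u), w'.IsCycle → w'.length ≤ w.length) :
    ∃ f : ℕ → V, LC G f w.length ∧ ∀ x, x ∈ w.support ↔ ∃ i, f i = x := by
  have h3 := hc.three_le_length
  have hz : ∀ i, i ≤ w.length → w.getVert (i % w.length) = w.getVert i := by
    intro i hi
    rcases hi.lt_or_eq with h | h
    · rw [Nat.mod_eq_of_lt h]
    · rw [h, Nat.mod_self]; simp
  refine ⟨fun i => w.getVert (i % w.length), ⟨?_, ?_, ?_, h3, ?_⟩, ?_⟩
  · intro i; simp
  · intro i j hi hj hij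
    simp only [Nat.mod_eq_of_lt hi, Nat.mod_eq_of_lt hj] at hij
    exact hc.getVert_injOn' (by simp; omega) (by simp; omega) hij
  · intro i
    have hm : i % w.length < w.length := Nat.mod_lt _ (by omega)
    have := w.adj_getVert_succ hm
    have e : (i + 1) % w.length = (i % w.length + 1) % w.length := by simp
    show G.Adj (w.getVert _) (w.getVert ((i + 1) % w.length))
    rw [e, hz _ hm]
    exact this
  · intro a b L hP hab h3
    obtain ⟨w', hw', hl'⟩ := hP.cycle hab h3
    rw [← hl']; exact hl _ _ hw'
  · intro x
    constructor
    · intro hx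
      obtain ⟨n, hn, hn'⟩ := Walk.mem_support_iff_exists_getVert.1 hx
      exact ⟨n, by rw [← hn]; exact hz n hn'⟩
    · rintro ⟨i, rfl⟩
      exact Walk.getVert_mem_support _ _

theorem circ_eq {G : SimpleGraph V} [Fintype V] {v : V} (w : G.Walk v v) (hc : w.IsCycle)
    (hl : ∀ (u : V) (w' : G.Walk u u), w'.IsCycle → w'.length ≤ w.length) :
    sSup {n | ∃ (v : V) (w : G.Walk v v), w.IsCycle ∧ w.length = n} = w.length := by
  apply IsGreatest.csSup_eq
  exact ⟨⟨v, w, hc, rfl⟩, by rintro n ⟨u, w', h, rfl⟩; exact hl u w' h⟩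

section
open scoped Classical

/-- reachability inside `U`. -/
inductive RU (G : SimpleGraph V) (U : Finset V) (a : V) : V → Prop
  | refl : a ∈ U → RU G U a a
  | step {b d : V} : RU G U a b → G.Adj b d → d ∈ U → RU G U a d

namespace RU
variable {G : SimpleGraph V} {U : Finset V} {a b d : V}

theorem left (h : RU G U a b) : a ∈ U := by
  induction h with
  | refl h => exact h
  | step _ _ _ ih => exact ih

theorem right (h : RU G U a b) : b ∈ U := by
  cases h with
  | refl h => exact h
  | step _ _ h => exact h

theorem mono {U' : Finset V} (h : RU G U a b) (hU : ∀ x ∈ U, x ∈ U') : RU G U' a b := by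
  induction h with
  | refl h => exact .refl (hU _ h)
  | step _ h1 h2 ih => exact .step ih h1 (hU _ h2)

theorem trans (h : RU G U a b) (h' : RU G U b d) : RU G U a d := by
  induction h' with
  | refl _ => exact h
  | step _ h1 h2 ih => exact .step ih h1 h2

theorem single (ha : a ∈ U) (hb : b ∈ U) (h : G.Adj a b) : RU G U a b :=
  .step (.refl ha) h hb

theorem symm (h : RU G U a b) : RU G U b a := by
  induction h with
  | refl h => exact .refl h
  | step h1 h2 h3 ih => exact (single h3 h1.right h2.symm).trans ih

theorem last (h : RU G U a b) (hab : a ≠ b) : ∃ e ∈ U, G.Adj e b := by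
  cases h with
  | refl h => exact absurd rfl hab
  | step h1 h2 h3 => exact ⟨_, h1.right, h2⟩

theorem first (h : RU G U a b) (hab : a ≠ b) : ∃ e ∈ U, G.Adj a e := by
  obtain ⟨e, he, h⟩ := h.symm.last hab.symm
  exact ⟨e, he, h.symm⟩

theorem exit {K : Finset V} (h : RU G U a b) (ha : a ∈ K) (hb : b ∉ K) :
    ∃ k e, k ∈ K ∧ e ∈ U ∧ e ∉ K ∧ G.Adj k e ∧ RU G (U ∩ K) a k := by
  have key : ∀ b, RU G U a b → (∃ k e, k ∈ K ∧ e ∈ U ∧ e ∉ K ∧ G.Adj k e ∧ RU G (U ∩ K) a k) ∨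
      RU G (U ∩ K) a b := by
    intro b h
    induction h with
    | refl h => right; exact .refl (by simp [h, ha])
    | @step p q h1 h2 h3 ih =>
      rcases ih with ih | ih
      · exact .inl ih
      · by_cases hq : q ∈ K
        · right; exact .step ih h2 (by simp [h3, hq])
        · left
          have := ih.right
          rw [Finset.mem_inter] at this
          exact ⟨p, q, this.2, h3, hq, h2, ih⟩
  rcases key b h with h | h
  · exact h
  · have := h.right
    rw [Finset.mem_inter] at this
    exact absurd this.2 hb

end RU

theorem PL.toRU {G : SimpleGraph V} {b : V} {L : List V} : ∀ {a : V}, PL G a L b →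
    RU G L.toFinset a b := by
  induction L with
  | nil => intro a h; have := h.hd; simp at this
  | cons x L ih =>
    intro a h
    have hx := h.hd
    simp at hx
    subst hx
    cases L with
    | nil =>
      have := h.lst
      simp at this
      subst this
      exact .refl (by simp)
    | cons y L =>
      have hc := h.ch
      rw [List.isChain_cons_cons] at hc
      have hw := ih (a := y) ⟨rfl, by simpa using h.lst, hc.2, (List.nodup_cons.1 h.nd).2⟩
      refine RU.trans (RU.single (by simp) (by simp) hc.1) (hw.mono ?_)
      intro z hz
      simp at hz ⊢
      tauto

theorem PL.takeTo {G : SimpleGraph V} {a b d : V} {L : List V} (h : PL G a L b) (hd : d ∈ L) :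
    ∃ L', PL G a L' d ∧ ∀ x ∈ L', x ∈ L := by
  obtain ⟨L1, L2, rfl⟩ := List.append_of_mem hd
  refine ⟨L1 ++ [d], ⟨?_, ?_, ?_, ?_⟩, ?_⟩
  · have := h.hd
    cases L1 <;> simp_all
  · simp
  · have := h.ch
    rw [List.isChain_append] at this ⊢
    refine ⟨this.1, by simp, ?_⟩
    simpa using this.2.2
  · have := h.nd
    rw [List.nodup_append'] at this ⊢
    refine ⟨this.1, by simp, ?_⟩
    intro x hx hx'
    simp at hx'
    subst hx'
    exact this.2.2 hx (by simp)
  · intro x hx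
    simp at hx ⊢
    tauto

theorem PL.tailRU {G : SimpleGraph V} {a b d : V} {L : List V} (h : PL G a L b) (hd : d ∈ L)
    (hda : d ≠ a) : RU G (L.toFinset.erase a) d b := by
  obtain ⟨L1, L2, rfl⟩ := List.append_of_mem hd
  have hP : PL G d (d :: L2) b := by
    refine ⟨rfl, ?_, ?_, ?_⟩
    · have := h.lst
      simpa [List.getLast?_append] using this
    · have := h.ch
      rw [List.isChain_append] at this
      exact this.2.1
    · have := h.nd
      rw [List.nodup_append'] at this
      exact this.2.1
  have ha : a ∈ L1 := by
    have := h.hd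
    cases L1 with
    | nil => simp at this; exact absurd this hda
    | cons x L1 => simp at this; simp [this]
  refine hP.toRU.mono ?_
  intro x hx
  rw [Finset.mem_erase]
  refine ⟨?_, ?_⟩
  · rintro rfl
    have := h.nd
    rw [List.nodup_append'] at this
    exact this.2.2 ha (by simpa using hx)
  · simp at hx ⊢; tauto

theorem RU.path {G : SimpleGraph V} {U : Finset V} {a b : V} (h : RU G U a b) :
    ∃ L, PL G a L b ∧ ∀ x ∈ L, x ∈ U := by
  induction h with
  | refl h => exact ⟨[a], PL.single G a, by simpa using h⟩
  | @step p q h1 h2 h3 ih =>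
    obtain ⟨L, hL, hU⟩ := ih
    by_cases hq : q ∈ L
    · obtain ⟨L', h', hs⟩ := hL.takeTo hq
      exact ⟨L', h', fun x hx => hU x (hs x hx)⟩
    · refine ⟨L ++ [q], hL.append (PL.single G q) h2 ?_, ?_⟩
      · intro x hx hx'
        simp at hx'
        subst hx'; exact hq hx
      · intro x hx
        simp at hx
        rcases hx with hx | rfl
        · exact hU x hx
        · exact h3

theorem RU.tail_avoid {G : SimpleGraph V} {A K : Finset V} {y x : V} (h : RU G A y x) (hy : y ∉ K)
    (hK : ∀ k ∈ K, ¬ RU G (A.erase y) k x) : ∃ L, PL G y L x ∧ ∀ z ∈ L, z ∈ A ∧ z ∉ K := by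
  obtain ⟨L, hL, hA⟩ := h.path
  refine ⟨L, hL, fun z hz => ⟨hA z hz, ?_⟩⟩
  intro hzK
  have hzy : z ≠ y := by rintro rfl; exact hy hzK
  refine hK z hzK ((hL.tailRU hz hzy).mono ?_)
  intro w hw
  rw [Finset.mem_erase] at hw ⊢
  exact ⟨hw.1, hA w (by simpa using hw.2)⟩

theorem PL.glue {G : SimpleGraph V} {a b d : V} {L L' : List V} (h : PL G a L b)
    (h' : PL G b L' d) (hd : ∀ z ∈ L, z ∈ L' → z = b) :
    PL G a (L ++ L'.tail) d := by
  cases L' with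
  | nil => have := h'.hd; simp at this
  | cons x T =>
    have hx := h'.hd
    simp at hx
    subst hx
    cases T with
    | nil =>
      have := h'.lst
      simp at this
      subst this
      simpa using h
    | cons y T =>
      have hc := h'.ch
      rw [List.isChain_cons_cons] at hc
      have hn := List.nodup_cons.1 h'.nd
      refine h.append (a' := y) ⟨rfl, by simpa using h'.lst, hc.2, hn.2⟩ hc.1 ?_
      intro z hz hz'
      have hz'' : z ∈ y :: T := hz'
      have := hd z hz (List.mem_cons_of_mem _ hz'')
      subst this
      exact hn.1 hz''

/-- `U` with an added edge `st` is two-connected. -/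
def Blk (G : SimpleGraph V) (U : Finset V) (s t : V) : Prop :=
  s ∈ U ∧ t ∈ U ∧ s ≠ t ∧ ∀ y ∈ U, ∀ v ∈ U, v ≠ y →
    RU G (U.erase y) v s ∨ RU G (U.erase y) v t

set_option maxHeartbeats 2000000 in
theorem LL (G : SimpleGraph V) : ∀ (n : ℕ) (U : Finset V) (s t w : V) (D : ℕ), U.card ≤ n →
    Blk G U s t → (∀ v ∈ U, v ≠ s → v ≠ t → v ≠ w → D ≤ (U.filter (G.Adj v)).card) →
    (∃ z ∈ U, z ≠ s ∧ z ≠ t ∧ z ≠ w) →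
    ∃ L, PL G s L t ∧ (∀ x ∈ L, x ∈ U) ∧ D + 1 ≤ L.length ∧ 3 ≤ L.length := by
  intro n
  induction n with
  | zero =>
    intro U s t w D hU hB
    have : U = ∅ := Finset.card_eq_zero.1 (by omega)
    subst this
    exact absurd hB.1 (by simp)
  | succ n ih =>
    intro U s t w D hU hB hdeg ⟨z0, hz0U, hz0s, hz0t, hz0w⟩
    obtain ⟨hsU, htU, hst, hblk⟩ := hB
    -- choice of the first edge
    obtain ⟨s', hs'U, hs't, hss', hs'w⟩ : ∃ s' ∈ U, s' ≠ t ∧ G.Adj s s' ∧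
        (w ∈ U → w ≠ t → G.Adj s w → s' = w) := by
      by_cases hw : w ∈ U ∧ w ≠ t ∧ G.Adj s w
      · exact ⟨w, hw.1, hw.2.1, hw.2.2, fun _ _ _ => rfl⟩
      · rcases hblk t htU z0 hz0U hz0t with h | h
        · obtain ⟨e, he, hes⟩ := h.last hz0s
          rw [Finset.mem_erase] at he
          exact ⟨e, he.2, he.1, hes.symm, fun a b c => absurd ⟨a, b, c⟩ hw⟩
        · have := h.right
          simp at this
    have hs's : s' ≠ s := hss'.ne'
    by_cases hI : Blk G (U.erase s) s' t
    · by_cases ha : ∃ z1 ∈ U.erase s, z1 ≠ s' ∧ z1 ≠ t ∧ z1 ≠ w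
      · obtain ⟨L, hL, hLU, hD, h3⟩ := ih (U.erase s) s' t w (D - 1) (by
          rw [Finset.card_erase_of_mem hsU]; omega) hI (by
            intro v hv h1 h2 h3
            rw [Finset.mem_erase] at hv
            have := hdeg v hv.2 hv.1 h2 h3
            rw [Finset.filter_erase]
            have := Finset.pred_card_le_card_erase (s := U.filter (G.Adj v)) (a := s)
            omega) ha
        refine ⟨[s] ++ L, (PL.single G s).append hL hss' ?_, ?_, ?_, ?_⟩
        · intro x hx hx'
          simp at hx
          subst hx
          have := hLU _ hx'
          simp at this
        · intro x hx
          simp at hx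
          rcases hx with rfl | hx
          · exact hsU
          · exact (Finset.mem_erase.1 (hLU x hx)).2
        · simp; omega
        · simp; omega
      · push Not at ha
        have hz0s' : z0 = s' := by
          by_contra hne
          exact hz0w (ha z0 (by simp [hz0U, hz0s]) hne hz0t)
        subst hz0s'
        have hcov : ∀ z ∈ U, z = s ∨ z = z0 ∨ z = t ∨ z = w := by
          intro z hz
          by_cases h1 : z = s
          · exact .inl h1
          by_cases h2 : z = z0
          · exact .inr (.inl h2)
          by_cases h3 : z = t
          · exact .inr (.inr (.inl h3))
          exact .inr (.inr (.inr (ha z (by simp [hz, h1]) h2 h3)))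
        have hz0deg := hdeg z0 hz0U hz0s hz0t hz0w
        have hfirst : ∃ e ∈ U.erase s, G.Adj z0 e := by
          rcases hblk s hsU z0 hz0U hz0s with h | h
          · have := h.right; simp at this
          · exact h.first hz0t
        have short : G.Adj z0 t → D ≤ 2 →
            ∃ L, PL G s L t ∧ (∀ x ∈ L, x ∈ U) ∧ D + 1 ≤ L.length ∧ 3 ≤ L.length := by
          intro h hD
          refine ⟨[s] ++ [z0] ++ [t], ((PL.single G s).append (PL.single G z0) hss' ?_).append
            (PL.single G t) h ?_, ?_, ?_, ?_⟩
          · simp [hz0s.symm]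
          · simp [hst, hz0t]
          · simp [hsU, hz0U, htU]
          · simp; omega
          · simp
        obtain ⟨e, he, hez⟩ := hfirst
        rw [Finset.mem_erase] at he
        by_cases hw : w ∈ U ∧ w ≠ s ∧ w ≠ t
        · obtain ⟨hwU, hws, hwt⟩ := hw
          have hsw : ¬ G.Adj s w := fun h => hz0w (hs'w hwU hwt h)
          have hwadj : G.Adj w t := by
            have : ∃ e ∈ U.erase z0, G.Adj w e := by
              rcases hblk z0 hz0U w hwU (Ne.symm hz0w) with h | h
              · exact h.first hws
              · exact h.first hwt
            obtain ⟨e, he, hwe⟩ := this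
            rw [Finset.mem_erase] at he
            rcases hcov e he.2 with rfl | rfl | rfl | rfl
            · exact absurd hwe.symm hsw
            · exact absurd rfl he.1
            · exact hwe
            · exact absurd hwe (G.loopless.irrefl _)
          by_cases hzw : G.Adj z0 w
          · refine ⟨[s] ++ [z0] ++ [w] ++ [t], (((PL.single G s).append (PL.single G z0) hss'
              ?_).append (PL.single G w) hzw ?_).append (PL.single G t) hwadj ?_, ?_, ?_, ?_⟩
            · simp [hz0s.symm]
            · simp [hws.symm, hz0w]
            · simp [hst, hz0t, hwt]
            · simp [hsU, hz0U, htU, hwU]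
            · have : (U.filter (G.Adj z0)) ⊆ {s, t, w} := by
                intro x hx
                rw [Finset.mem_filter] at hx
                rcases hcov x hx.1 with rfl | rfl | rfl | rfl
                · simp
                · exact absurd hx.2 (G.loopless.irrefl _)
                · simp
                · simp
              have := (Finset.card_le_card this).trans Finset.card_le_three
              simp; omega
            · simp
          · apply short
            · rcases hcov e he.2 with rfl | rfl | rfl | rfl
              · exact absurd rfl he.1
              · exact absurd hez (G.loopless.irrefl _)
              · exact hez
              · exact absurd hez hzw
            · have : (U.filter (G.Adj z0)) ⊆ {s, t} := by
                intro x hx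
                rw [Finset.mem_filter] at hx
                rcases hcov x hx.1 with rfl | rfl | rfl | rfl
                · simp
                · exact absurd hx.2 (G.loopless.irrefl _)
                · simp
                · exact absurd hx.2 hzw
              have := (Finset.card_le_card this).trans Finset.card_le_two
              omega
        · have hcov' : ∀ z ∈ U, z = s ∨ z = z0 ∨ z = t := by
            intro z hz
            rcases hcov z hz with h | h | h | rfl
            · tauto
            · tauto
            · tauto
            · by_cases h1 : z = s
              · tauto
              · by_cases h2 : z = t
                · tauto
                · exact absurd ⟨hz, h1, h2⟩ hw
          apply short
          · rcases hcov' e he.2 with rfl | rfl | rfl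
            · exact absurd rfl he.1
            · exact absurd hez (G.loopless.irrefl _)
            · exact hez
          · have : (U.filter (G.Adj z0)) ⊆ {s, t} := by
              intro x hx
              rw [Finset.mem_filter] at hx
              rcases hcov' x hx.1 with rfl | rfl | rfl
              · simp
              · exact absurd hx.2 (G.loopless.irrefl _)
              · simp
            have := (Finset.card_le_card this).trans Finset.card_le_two
            omega
    · -- Case II
      have hs'U' : s' ∈ U.erase s := by simp [hs'U, hs's]
      have htU' : t ∈ U.erase s := by simp [htU, hst.symm]
      unfold Blk at hI
      push Not at hI
      obtain ⟨x, hx, v, hv, hvx, hvs', hvt⟩ := hI hs'U' htU' hs't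
      set A := (U.erase s).erase x with hA
      set K := A.filter (fun a => RU G A v a) with hK
      have memK : ∀ a, a ∈ K ↔ RU G A v a := by
        intro a
        rw [hK, Finset.mem_filter]
        exact ⟨fun h => h.2, fun h => ⟨h.right, h⟩⟩
      have hKA : ∀ a ∈ K, a ≠ x ∧ a ≠ s ∧ a ∈ U := by
        intro a ha
        have := (Finset.mem_filter.1 ha).1
        rw [hA, Finset.mem_erase, Finset.mem_erase] at this
        exact this
      have hs'K : s' ∉ K := by rw [memK]; exact hvs'
      have htK : t ∉ K := by rw [memK]; exact hvt
      have hsK : s ∉ K := fun h => (hKA s h).2.1 rfl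
      have hxK : x ∉ K := fun h => (hKA x h).1 rfl
      have hvK : v ∈ K := by rw [memK]; exact .refl (by rw [hA, Finset.mem_erase]; exact ⟨hvx, hv⟩)
      rw [Finset.mem_erase] at hx
      have hclose : ∀ k ∈ K, ∀ e ∈ U, e ∉ K → G.Adj k e → e = s ∨ e = x := by
        intro k hk e he heK hke
        by_contra hcon
        push Not at hcon
        apply heK
        rw [memK] at hk ⊢
        exact .step hk hke (by simp [hA, hcon, he])
      set W := insert s (insert x K) with hW
      have hWmem : ∀ a, a ∈ W ↔ a = s ∨ a = x ∨ a ∈ K := by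
        intro a; simp [hW]
      have hWU : ∀ a ∈ W, a ∈ U := by
        intro a ha
        rw [hWmem] at ha
        rcases ha with rfl | rfl | ha
        · exact hsU
        · exact hx.2
        · exact (hKA a ha).2.2
      have hexit : ∀ y ∈ U, ∀ v' ∈ K, v' ≠ y → ∃ k e, k ∈ K ∧ e ∈ U.erase y ∧ e ∉ K ∧ G.Adj k e ∧
          RU G ((U.erase y) ∩ K) v' k := by
        intro y hy v' hv' hvy
        rcases hblk y hy v' (hKA v' hv').2.2 hvy with h | h
        · exact h.exit hv' hsK
        · exact h.exit hv' htK
      have hWB : Blk G W s x := by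
        refine ⟨by simp [hW], by simp [hW], hx.1.symm, ?_⟩
        intro y hy v' hv' hvy
        have hv'' := hv'
        rw [hWmem] at hv''
        rcases hv'' with rfl | rfl | hvK'
        · left; exact .refl (by simp [hvy, hv'])
        · right; exact .refl (by simp [hvy, hv'])
        · obtain ⟨k, e, hk, he, heK, hke, hr⟩ := hexit y (hWU y hy) v' hvK' hvy
          rw [Finset.mem_erase] at he
          have hr' : RU G (W.erase y) v' k := by
            refine hr.mono ?_
            intro z hz
            simp only [Finset.mem_inter, Finset.mem_erase] at hz ⊢
            exact ⟨hz.1.1, (hWmem z).2 (.inr (.inr hz.2))⟩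
          rcases hclose k hk e he.2 heK hke with rfl | rfl
          · left; exact hr'.step hke (by simp [hW, he.1])
          · right; exact hr'.step hke (by simp [hW, he.1])
      have hWcard : W.card < U.card := by
        apply Finset.card_lt_card
        rw [Finset.ssubset_iff_of_subset hWU]
        by_cases hxt : x = t
        · refine ⟨s', hs'U, ?_⟩
          rw [hWmem, hxt]
          tauto
        · refine ⟨t, htU, ?_⟩
          rw [hWmem]
          have := Ne.symm hxt
          have := hst.symm
          tauto
      by_cases hKw : ∃ z ∈ K, z ≠ w
      · obtain ⟨z, hzK, hzw⟩ := hKw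
        obtain ⟨L, hL, hLW, hLD, hL3⟩ := ih W s x w D (by omega) hWB (by
          intro v' hv' h1 h2 h3
          have hvK' : v' ∈ K := by rw [hWmem] at hv'; tauto
          have hne : v' ≠ t := by rintro rfl; exact htK hvK'
          refine (hdeg v' (hWU v' hv') h1 hne h3).trans (Finset.card_le_card ?_)
          intro a ha
          rw [Finset.mem_filter] at ha ⊢
          refine ⟨?_, ha.2⟩
          rw [hWmem]
          by_cases haK : a ∈ K
          · tauto
          · have := hclose v' hvK' a ha.1 haK ha.2
            tauto) ⟨z, (hWmem z).2 (.inr (.inr hzK)), (hKA z hzK).2.1, (hKA z hzK).1, hzw⟩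
        by_cases hxt : x = t
        · subst hxt
          exact ⟨L, hL, fun a ha => hWU a (hLW a ha), hLD, hL3⟩
        · have hr : RU G (U.erase s) x t := by
            rcases hblk s hsU x hx.2 hx.1 with h | h
            · have := h.right; simp at this
            · exact h
          obtain ⟨L2, hL2, hL2A⟩ := hr.tail_avoid hxK (by
            intro k hk hkt
            rw [memK] at hk
            exact htK ((memK t).2 (hk.trans hkt)))
          refine ⟨L ++ L2.tail, hL.glue hL2 ?_, ?_, ?_, ?_⟩
          · intro z hz hz2
            have h1 := hLW z hz
            have h2 := hL2A z hz2
            rw [hWmem] at h1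
            rw [Finset.mem_erase] at h2
            tauto
          · intro a ha
            rw [List.mem_append] at ha
            rcases ha with ha | ha
            · exact hWU a (hLW a ha)
            · exact (Finset.mem_erase.1 (hL2A a (List.mem_of_mem_tail ha)).1).2
          · simp; omega
          · simp; omega
      · push Not at hKw
        exfalso
        have hvw := hKw v hvK
        subst hvw
        obtain ⟨k, e, hk, he, heK, hke, hr⟩ := hexit x hx.2 v hvK hvx
        rw [Finset.mem_erase] at he
        have hkv := hKw k hk
        subst hkv
        rcases hclose k hk e he.2 heK hke with rfl | rfl
        · have hkt : k ≠ t := by rintro rfl; exact htK hk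
          have := hs'w (hKA k hk).2.2 hkt hke.symm
          subst this
          exact hs'K hk
        · exact he.1 rfl

end

section
open scoped Classical

/-- the vertex set of the cycle. -/
noncomputable def Cs (f : ℕ → V) (c : ℕ) : Finset V := (Finset.range c).image f

namespace LC
variable {G : SimpleGraph V} {f : ℕ → V} {c : ℕ}

theorem mem_Cs (h : LC G f c) {v : V} : v ∈ Cs f c ↔ ∃ i, f i = v := by
  unfold Cs
  rw [Finset.mem_image]
  constructor
  · rintro ⟨i, _, h⟩; exact ⟨i, h⟩
  · rintro ⟨i, rfl⟩
    have := h.three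
    exact ⟨i % c, Finset.mem_range.2 (Nat.mod_lt _ (by omega)), h.mod i⟩

theorem f_mem (h : LC G f c) (i : ℕ) : f i ∈ Cs f c := h.mem_Cs.2 ⟨i, rfl⟩

theorem card_Cs (h : LC G f c) : (Cs f c).card = c := by
  unfold Cs
  rw [Finset.card_image_of_injOn, Finset.card_range]
  intro i hi j hj hij
  simp at hi hj
  exact h.inj i j hi hj hij

/-- any vertex of the cycle is reached going forward from any index -/
theorem fwd (h : LC G f c) (i : ℕ) {v : V} (hv : v ∈ Cs f c) : ∃ k, k < c ∧ f (i + k) = v := by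
  obtain ⟨j, rfl⟩ := h.mem_Cs.1 hv
  have h3 := h.three
  refine ⟨(j + c * i - i) % c, Nat.mod_lt _ (by omega), ?_⟩
  have hge : i ≤ c * i := Nat.le_mul_of_pos_left _ (by omega)
  have e : (i + (j + c * i - i) % c) % c = j % c := by
    rw [Nat.add_mod_mod]
    have : i + (j + c * i - i) = j + c * i := by omega
    rw [this, Nat.add_mul_mod_self_left]
  rw [← h.mod, e, h.mod]

theorem fwd' (h : LC G f c) (i : ℕ) {v : V} (hv : v ∈ Cs f c) (hne : v ≠ f i) :
    ∃ k, 0 < k ∧ k < c ∧ f (i + k) = v := by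
  obtain ⟨k, hk, hf⟩ := h.fwd i hv
  refine ⟨k, ?_, hk, hf⟩
  rcases Nat.eq_zero_or_pos k with rfl | h
  · exact absurd hf.symm (by simpa using hne)
  · exact h

theorem cancel (h : LC G f c) {i j k : ℕ} (he : f (i + k) = f (j + k)) : f i = f j := by
  have h3 := h.three
  have h1 : (i + k) % c = (j + k) % c :=
    h.inj _ _ (Nat.mod_lt _ (by omega)) (Nat.mod_lt _ (by omega)) (by rw [h.mod, h.mod, he])
  have h2 : i ≡ j [MOD c] := Nat.ModEq.add_right_cancel' k h1
  rw [← h.mod i, ← h.mod j, h2]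

theorem congr (h : LC G f c) {i j : ℕ} (k : ℕ) (he : f i = f j) : f (i + k) = f (j + k) := by
  have h3 := h.three
  have h1 : i % c = j % c :=
    h.inj _ _ (Nat.mod_lt _ (by omega)) (Nat.mod_lt _ (by omega)) (by rw [h.mod, h.mod, he])
  have h2 : i + k ≡ j + k [MOD c] := Nat.ModEq.add_right k h1
  rw [← h.mod (i + k), ← h.mod (j + k), h2]

theorem exists_succ (h : LC G f c) : ∃ σ : V → V, ∀ i, σ (f i) = f (i + 1) := by
  refine ⟨fun v => if hv : ∃ i, f i = v then f (hv.choose + 1) else v, ?_⟩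
  intro i
  have hv : ∃ j, f j = f i := ⟨i, rfl⟩
  simp only [hv, dif_pos]
  exact h.congr 1 hv.choose_spec

theorem switch (h : LC G f c) (T : Finset V) (hTo : ∀ t ∈ T, t ∉ Cs f c) (D : ℕ)
    (hT : ∀ a ∈ T, ∀ b ∈ T, a ≠ b → ∃ L, PL G a L b ∧ (∀ x ∈ L, x ∉ Cs f c) ∧ D + 1 ≤ L.length)
    (hc : D + 2 ≤ c) :
    ∃ N Sw : Finset V, (∀ u, u ∈ N ↔ u ∈ Cs f c ∧ ∃ a ∈ T, G.Adj u a) ∧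
      2 * N.card + D * Sw.card ≤ c ∧
      (∀ u ∈ Cs f c, ∀ a ∈ T, ∀ b ∈ T, a ≠ b → G.Adj u a → G.Adj u b → u ∈ Sw) ∧
      ∃ S : Finset V, S.card ≤ max 1 Sw.card ∧
        ∀ u ∈ Cs f c, ∀ a ∈ T, G.Adj u a → u ∈ S ∨ a ∈ S := by
  have h3 := h.three
  set N := (Cs f c).filter (fun u => ∃ a ∈ T, G.Adj u a) with hN
  have memN : ∀ u, u ∈ N ↔ u ∈ Cs f c ∧ ∃ a ∈ T, G.Adj u a := by
    intro u; rw [hN, Finset.mem_filter]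
  set Sw := N.filter (fun u => ∀ i, f i = u → ∀ k, 1 ≤ k → k ≤ D + 1 → f (i + k) ∉ N) with hSw
  have gap : ∀ i k a b, 0 < k → k < c → a ∈ T → b ∈ T → G.Adj (f i) a → G.Adj (f (i + k)) b →
      2 ≤ k ∧ (a ≠ b → D + 2 ≤ k) := by
    intro i k a b hk hkc ha hb hia hkb
    by_cases hab : a = b
    · subst hab
      have := h.L1 hk hkc (R := [a]) (.inr ⟨a, a, PL.single G a, hia, hkb.symm⟩) (by
        intro r hr j hj
        simp at hr
        subst hr
        exact hTo _ ha (h.mem_Cs.2 ⟨j, hj⟩))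
      simp at this
      exact ⟨this, fun h => absurd rfl h⟩
    · obtain ⟨L, hL, hLo, hLD⟩ := hT a ha b hb hab
      have := h.L1 hk hkc (R := L) (.inr ⟨a, b, hL, hia, hkb.symm⟩) (by
        intro r hr j hj
        exact hLo _ hr (h.mem_Cs.2 ⟨j, hj⟩))
      exact ⟨by
        have hne : L.length ≠ 1 := by
          intro h1
          obtain ⟨z, rfl⟩ := List.length_eq_one_iff.1 h1
          have h1 := hL.hd
          have h2 := hL.lst
          simp at h1 h2
          exact hab (h1.symm.trans h2)
        have := hL.length_pos
        omega, fun _ => by omega⟩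
  refine ⟨N, Sw, memN, ?_, ?_, ?_⟩
  · -- counting
    obtain ⟨σ, hσ⟩ := h.exists_succ
    have hσk : ∀ k i, σ^[k] (f i) = f (i + k) := by
      intro k
      induction k with
      | zero => intro i; rfl
      | succ k ih => intro i; rw [Function.iterate_succ_apply, hσ, ih]; congr 1; omega
    set I : Finset (V × ℕ) := N ×ˢ Finset.range 2 ∪ Sw ×ˢ Finset.Icc 2 (D + 1) with hI
    have hIprop : ∀ p ∈ I, p.1 ∈ N ∧ ∀ i, f i = p.1 → ∀ k, 1 ≤ k → k ≤ p.2 → f (i + k) ∉ N := by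
      rintro ⟨u, k⟩ hp
      rw [hI, Finset.mem_union, Finset.mem_product, Finset.mem_product] at hp
      rcases hp with ⟨hu, hk⟩ | ⟨hu, hk⟩
      · refine ⟨hu, ?_⟩
        intro i hi k' h1 h2 hmem
        simp at hk hu h2
        have : k' = 1 := by omega
        subst this
        rw [memN] at hu hmem
        obtain ⟨_, a, ha, ha'⟩ := hu
        obtain ⟨_, b, hb, hb'⟩ := hmem
        have := (gap i 1 a b (by omega) (by omega) ha hb (by rw [hi]; exact ha') hb').1
        omega
      · rw [hSw, Finset.mem_filter] at hu
        simp at hk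
        exact ⟨hu.1, fun i hi k' h1 h2 => hu.2 i hi k' h1 (by simp at h2; omega)⟩
    have key : ∀ p ∈ I, ∀ q ∈ I, p.2 ≤ q.2 → σ^[p.2] p.1 = σ^[q.2] q.1 → p = q := by
      rintro ⟨u, k⟩ hp ⟨v, l⟩ hq hkl he
      obtain ⟨hu, _⟩ := hIprop _ hp
      obtain ⟨hv, hv'⟩ := hIprop _ hq
      simp only at hu hv hv' hkl he
      obtain ⟨i, hi⟩ := h.mem_Cs.1 ((memN u).1 hu).1
      obtain ⟨j, hj⟩ := h.mem_Cs.1 ((memN v).1 hv).1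
      rw [← hi, ← hj, hσk, hσk] at he
      obtain ⟨m, rfl⟩ := Nat.exists_eq_add_of_le hkl
      have e1 : j + (k + m) = (j + m) + k := by omega
      rw [e1] at he
      have e2 := h.cancel he
      rcases Nat.eq_zero_or_pos m with rfl | hm
      · have : u = v := by rw [← hi, ← hj, e2]; rfl
        subst this; rfl
      · exfalso
        apply hv' j hj m hm (by omega)
        rw [← e2, hi]; exact hu
    have hle : I.card ≤ (Cs f c).card := by
      apply Finset.card_le_card_of_injOn (fun p => σ^[p.2] p.1)
      · rintro ⟨u, k⟩ hp
        have hu := (hIprop _ hp).1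
        obtain ⟨i, hi⟩ := h.mem_Cs.1 ((memN u).1 hu).1
        simp only [← hi, hσk]
        exact h.f_mem _
      · intro p hp q hq he
        rcases le_total p.2 q.2 with hl | hl
        · exact key p hp q hq hl he
        · exact (key q hq p hp hl he.symm).symm
    rw [h.card_Cs, hI, Finset.card_union_of_disjoint, Finset.card_product, Finset.card_product] at hle
    · simp at hle
      rw [mul_comm 2, mul_comm D]
      exact hle
    · rw [Finset.disjoint_left]
      rintro ⟨u, k⟩ h1 h2
      simp at h1 h2
      omega
  · intro u hu a ha b hb hab hua hub
    rw [hSw, Finset.mem_filter]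
    refine ⟨(memN u).2 ⟨hu, a, ha, hua⟩, ?_⟩
    intro i hi k h1 h2 hk
    subst hi
    obtain ⟨_, d, hd, hd'⟩ := (memN _).1 hk
    by_cases hda : a = d
    · subst hda
      have := (gap i k b a h1 (by omega) hb hd hub hd').2 (Ne.symm hab)
      omega
    · have := (gap i k a d h1 (by omega) ha hd hua hd').2 hda
      omega
  · -- covering
    set F : V → V := fun u => if hu : ∃ a ∈ T, G.Adj u a ∧ ∀ b ∈ T, G.Adj u b → b = a
      then hu.choose else u with hF
    have F1 : ∀ u a, a ∈ T → G.Adj u a → (∀ b ∈ T, G.Adj u b → b = a) → F u = a := by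
      intro u a ha hua hb
      have hu : ∃ a ∈ T, G.Adj u a ∧ ∀ b ∈ T, G.Adj u b → b = a := ⟨a, ha, hua, hb⟩
      have e : F u = hu.choose := by rw [hF]; exact dif_pos hu
      rw [e]
      have := hu.choose_spec
      exact hb _ this.1 this.2.1
    have F2 : ∀ u a, a ∈ T → G.Adj u a → F u = u ∨ F u = a := by
      intro u a ha hua
      by_cases hu : ∃ a ∈ T, G.Adj u a ∧ ∀ b ∈ T, G.Adj u b → b = a
      · obtain ⟨b, hb, hub, hb'⟩ := hu
        right
        rw [hb' a ha hua]
        exact F1 u b hb hub hb'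
      · left; rw [hF]; exact dif_neg hu
    have F3 : ∀ i k, 1 ≤ k → k ≤ D + 1 → f i ∈ N → f (i + k) ∈ N → F (f i) = F (f (i + k)) := by
      intro i k h1 h2 hi hk
      obtain ⟨_, a, ha, ha'⟩ := (memN _).1 hi
      obtain ⟨_, b, hb, hb'⟩ := (memN _).1 hk
      have g : ∀ a ∈ T, G.Adj (f i) a → ∀ b ∈ T, G.Adj (f (i + k)) b → b = a := by
        intro a ha ha' b hb hb'
        by_contra hne
        have := (gap i k a b h1 (by omega) ha hb ha' hb').2 (Ne.symm hne)
        omega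
      have hba := g a ha ha' b hb hb'
      subst hba
      rw [F1 (f i) b ha ha' (fun d hd hd' => (g d hd hd' b hb hb').symm),
        F1 (f (i + k)) b ha hb' (fun d hd hd' => g b ha ha' d hd hd')]
    have F4 : ∀ n i, f i ∈ N → f (i + n) ∈ N → F (f i) ∈ Sw.image F ∨ F (f i) = F (f (i + n)) := by
      intro n
      induction n using Nat.strong_induction_on with
      | _ n ih =>
        intro i hi hn
        rcases Nat.eq_zero_or_pos n with rfl | hn0
        · right; rfl
        by_cases hnD : n ≤ D + 1
        · right; exact F3 i n hn0 hnD hi hn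
        by_cases hs : f i ∈ Sw
        · left; exact Finset.mem_image_of_mem F hs
        · rw [hSw, Finset.mem_filter] at hs
          push Not at hs
          obtain ⟨j, hj, k, hk1, hk2, hkN⟩ := hs hi
          rw [h.congr k hj] at hkN
          have e := F3 i k hk1 hk2 hi hkN
          have e2 : i + k + (n - k) = i + n := by omega
          have := ih (n - k) (by omega) (i + k) hkN (by rw [e2]; exact hn)
          rw [e2] at this
          rw [e]; exact this
    by_cases hN0 : N.Nonempty
    · by_cases hS0 : Sw.Nonempty
      · refine ⟨Sw.image F, Finset.card_image_le.trans (le_max_right _ _), ?_⟩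
        intro u hu a ha hua
        obtain ⟨v, hv⟩ := hS0
        have hvN : v ∈ N := (Finset.mem_filter.1 hv).1
        obtain ⟨i, rfl⟩ := h.mem_Cs.1 hu
        obtain ⟨k, _, hk⟩ := h.fwd i ((memN v).1 hvN).1
        have : F (f i) ∈ Sw.image F := by
          rcases F4 k i ((memN _).2 ⟨hu, a, ha, hua⟩) (by rw [hk]; exact hvN) with h | h
          · exact h
          · rw [h, hk]; exact Finset.mem_image_of_mem F hv
        rcases F2 (f i) a ha hua with e | e
        · left; rwa [e] at this
        · right; rwa [e] at this
      · obtain ⟨v, hvN⟩ := hN0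
        refine ⟨{F v}, by simp, ?_⟩
        intro u hu a ha hua
        obtain ⟨i, rfl⟩ := h.mem_Cs.1 hu
        obtain ⟨k, _, hk⟩ := h.fwd i ((memN v).1 hvN).1
        have : F (f i) = F v := by
          rcases F4 k i ((memN _).2 ⟨hu, a, ha, hua⟩) (by rw [hk]; exact hvN) with h | h
          · rw [Finset.not_nonempty_iff_eq_empty.1 hS0] at h
            simp at h
          · rw [h, hk]
        rcases F2 (f i) a ha hua with e | e
        · left; simp [← this, e]
        · right; simp [← this, e]
    · refine ⟨∅, by simp, ?_⟩
      intro u hu a ha hua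
      exact absurd ⟨u, (memN u).2 ⟨hu, a, ha, hua⟩⟩ hN0

/-- paths between distinct vertices with distinct attachments force a long cycle -/
theorem long_of (h : LC G f c) {D : ℕ} {a b u v : V} {L : List V} (hL : PL G a L b)
    (hLo : ∀ x ∈ L, x ∉ Cs f c) (hD : D + 1 ≤ L.length) (hu : u ∈ Cs f c) (hv : v ∈ Cs f c)
    (huv : u ≠ v) (hua : G.Adj u a) (hvb : G.Adj v b) : D + 2 ≤ c := by
  obtain ⟨i, rfl⟩ := h.mem_Cs.1 hu
  obtain ⟨k, hk0, hkc, rfl⟩ := h.fwd' i hv huv.symm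
  have := h.L1 hk0 hkc (R := L) (.inr ⟨a, b, hL, hua, hvb.symm⟩) (by
        intro r hr j hj
        exact hLo _ hr (h.mem_Cs.2 ⟨j, hj⟩))
  omega

end LC

end

section
open scoped Classical

/-- no vertex set smaller than `k` separates. -/
def NoSep (G : SimpleGraph V) (k : ℕ) : Prop :=
  ∀ S A : Finset V, S.card < k → (∃ a ∈ A, a ∉ S) → (∃ b, b ∉ A ∧ b ∉ S) →
    ∃ p q, p ∈ A ∧ q ∉ A ∧ p ∉ S ∧ q ∉ S ∧ G.Adj p q

/-- a component `H` outside the longest cycle. -/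
structure HC (G : SimpleGraph V) (f : ℕ → V) (c δ : ℕ) (H : Finset V) : Prop where
  lc : LC G f c
  out : ∀ h ∈ H, h ∉ Cs f c
  closed : ∀ p ∈ H, ∀ q, G.Adj p q → q ∈ H ∨ q ∈ Cs f c
  conn : ∀ p ∈ H, ∀ q ∈ H, RU G H p q
  deg : ∀ h ∈ H, δ ≤ ((Cs f c).filter (G.Adj h)).card + (H.filter (G.Adj h)).card
  sep : NoSep G 4

theorem comp_conn {G : SimpleGraph V} {B : Finset V} {v a : V} (h : RU G B v a) :
    RU G (B.filter (fun z => RU G B v z)) v a := by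
  induction h with
  | refl h => exact .refl (Finset.mem_filter.2 ⟨h, .refl h⟩)
  | step h1 h2 h3 ih => exact .step ih h2 (Finset.mem_filter.2 ⟨h3, .step h1 h2 h3⟩)

theorem LC.two_more {G : SimpleGraph V} {f : ℕ → V} {c : ℕ} (h : LC G f c) (u : V) :
    ∃ v ∈ Cs f c, v ≠ u := by
  have h3 := h.three
  by_cases h0 : f 0 = u
  · refine ⟨f 1, h.f_mem 1, ?_⟩
    intro h1
    have := h.inj 0 1 (by omega) (by omega) (by rw [h0, h1])
    omega
  · exact ⟨f 0, h.f_mem 0, h0⟩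

namespace HC
variable {G : SimpleGraph V} {f : ℕ → V} {c δ : ℕ} {H : Finset V}

theorem twoConn (h : HC G f c δ H) (hcard : 3 ≤ H.card)
    (h2 : ∀ y ∈ H, ∀ u ∈ H, ∀ v ∈ H, u ≠ y → v ≠ y → RU G (H.erase y) u v) : 4 * δ ≤ c + 8 := by
  by_cases hδ : δ ≤ 2
  · omega
  push Not at hδ
  obtain ⟨h0, h0H, h0max⟩ := Finset.exists_max_image H (fun z => ((Cs f c).filter (G.Adj z)).card)
    (Finset.card_pos.1 (by omega))
  obtain ⟨h1, h1H', h1max⟩ := Finset.exists_max_image (H.erase h0)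
    (fun z => ((Cs f c).filter (G.Adj z)).card)
    (Finset.card_pos.1 (by rw [Finset.card_erase_of_mem h0H]; omega))
  have h1H : h1 ∈ H := (Finset.mem_erase.1 h1H').2
  have h10 : h1 ≠ h0 := (Finset.mem_erase.1 h1H').1
  set d := ((Cs f c).filter (G.Adj h1)).card with hd
  have hd0 : d ≤ ((Cs f c).filter (G.Adj h0)).card := h0max h1 h1H
  set X := (Cs f c).filter (G.Adj h0) with hX
  set Y := (Cs f c).filter (G.Adj h1) with hY
  obtain ⟨D, d', hDd, hd', hD2, hDd2⟩ : ∃ D d', D + d' = δ ∧ d' ≤ d ∧ 2 ≤ D ∧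
      (2 < D → D + d = δ) := by
    by_cases hh : d ≤ δ - 2
    · exact ⟨δ - d, d, by omega, le_rfl, by omega, by omega⟩
    · exact ⟨2, δ - 2, by omega, by omega, le_rfl, by omega⟩
  have hbig : 2 < D → 4 ≤ H.card := by
    intro h3
    have e1 := hDd2 h3
    have e2 := h.deg h1 h1H
    have : (H.filter (G.Adj h1)) ⊆ H.erase h1 := by
      intro z hz
      rw [Finset.mem_filter] at hz
      rw [Finset.mem_erase]
      exact ⟨hz.2.ne', hz.1⟩
    have e3 := Finset.card_le_card this
    rw [Finset.card_erase_of_mem h1H] at e3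
    omega
  have hpath : ∀ a ∈ H, ∀ b ∈ H, a ≠ b →
      ∃ L, PL G a L b ∧ (∀ x ∈ L, x ∉ Cs f c) ∧ D + 1 ≤ L.length := by
    intro a ha b hb hab
    have hB : Blk G H a b := by
      refine ⟨ha, hb, hab, ?_⟩
      intro y hy v hv hvy
      by_cases hya : a = y
      · right; exact h2 y hy v hv b hb hvy (by rw [← hya]; exact hab.symm)
      · left; exact h2 y hy v hv a ha hvy hya
    by_cases hz : ∃ z ∈ H, z ≠ a ∧ z ≠ b ∧ z ≠ h0
    · obtain ⟨L, hL, hLH, h5, h6⟩ := LL G H.card H a b h0 (δ - d) le_rfl hB (by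
        intro v hv _ _ hv0
        have e1 := h1max v (Finset.mem_erase.2 ⟨hv0, hv⟩)
        have e2 := h.deg v hv
        omega) hz
      refine ⟨L, hL, fun x hx => h.out x (hLH x hx), ?_⟩
      by_cases h3 : 2 < D
      · have := hDd2 h3; omega
      · omega
    · push Not at hz
      have hsub : H ⊆ {a, b, h0} := by
        intro z hzH
        simp only [Finset.mem_insert, Finset.mem_singleton]
        by_cases h7 : z = a
        · tauto
        by_cases h8 : z = b
        · tauto
        exact .inr (.inr (hz z hzH h7 h8))
      have hle := (Finset.card_le_card hsub)
      have h3 : ¬ 2 < D := by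
        intro h3
        have := hbig h3
        have := hle.trans Finset.card_le_three
        omega
      have hex : ∃ z ∈ H, z ≠ a ∧ z ≠ b ∧ z ≠ a := by
        by_contra hcon
        push Not at hcon
        have : H ⊆ {a, b} := by
          intro z hzH
          simp only [Finset.mem_insert, Finset.mem_singleton]
          by_contra hc2
          push Not at hc2
          exact hc2.1 (hcon z hzH hc2.1 hc2.2)
        have := (Finset.card_le_card this).trans Finset.card_le_two
        omega
      obtain ⟨L, hL, hLH, h5, h6⟩ := LL G H.card H a b a 0 le_rfl hB (by
        intro v hv _ _ hv0
        omega) hex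
      exact ⟨L, hL, fun x hx => h.out x (hLH x hx), by omega⟩
  -- two attachments
  have hc : D + 2 ≤ c := by
    obtain ⟨p1, q1, hp1, hq1, _, _, hpq1⟩ := h.sep ∅ H (by simp) ⟨h0, h0H, by simp⟩
      ⟨f 0, fun hh => h.out _ hh (h.lc.f_mem 0), by simp⟩
    have hq1C : q1 ∈ Cs f c := (h.closed p1 hp1 q1 hpq1).resolve_left hq1
    obtain ⟨a, haH, hap⟩ : ∃ a ∈ H, a ≠ p1 := by
      by_cases hh : h0 = p1
      · exact ⟨h1, h1H, by rw [← hh]; exact h10⟩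
      · exact ⟨h0, h0H, hh⟩
    obtain ⟨v, hv, hvq⟩ := h.lc.two_more q1
    obtain ⟨p2, q2, hp2, hq2, hp2S, hq2S, hpq2⟩ := h.sep {p1, q1} H
      (Finset.card_le_two.trans_lt (by omega))
      ⟨a, haH, by
        simp only [Finset.mem_insert, Finset.mem_singleton]
        rintro (hh | hh)
        · exact hap hh
        · exact h.out a haH (hh ▸ hq1C)⟩
      ⟨v, fun hh => h.out _ hh hv, by
        simp only [Finset.mem_insert, Finset.mem_singleton]
        rintro (hh | hh)
        · exact h.out p1 hp1 (hh ▸ hv)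
        · exact hvq hh⟩
    have hq2C : q2 ∈ Cs f c := (h.closed p2 hp2 q2 hpq2).resolve_left hq2
    simp only [Finset.mem_insert, Finset.mem_singleton, not_or] at hp2S hq2S
    obtain ⟨L, hL, hLo, hLD⟩ := hpath p1 hp1 p2 hp2 (Ne.symm hp2S.1)
    exact h.lc.long_of hL hLo hLD hq1C hq2C (Ne.symm hq2S.2) hpq1.symm hpq2.symm
  obtain ⟨N, Sw, hN, hcount, hSw, S, hScard, hScov⟩ := h.lc.switch H h.out D hpath hc
  have hXYN : X ∪ Y ⊆ N := by
    intro z hz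
    rw [hN]
    rw [Finset.mem_union] at hz
    rcases hz with hz | hz
    · rw [hX, Finset.mem_filter] at hz
      exact ⟨hz.1, h0, h0H, hz.2.symm⟩
    · rw [hY, Finset.mem_filter] at hz
      exact ⟨hz.1, h1, h1H, hz.2.symm⟩
  have hXYS : X ∩ Y ⊆ Sw := by
    intro z hz
    rw [Finset.mem_inter, hX, hY, Finset.mem_filter, Finset.mem_filter] at hz
    exact hSw z hz.1.1 h0 h0H h1 h1H h10.symm hz.1.2.symm hz.2.2.symm
  have e1 := Finset.card_union_add_card_inter X Y
  have e2 := Finset.card_le_card hXYN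
  have e3 := Finset.card_le_card hXYS
  by_cases h3 : 2 < D
  · have hs4 : 4 ≤ Sw.card := by
      by_contra hs
      push Not at hs
      have hScard3 : S.card < 4 := by omega
      obtain ⟨a, ha, haS⟩ : ∃ a ∈ H, a ∉ S := by
        by_contra hcon
        push Not at hcon
        have := Finset.card_le_card (show H ⊆ S from hcon)
        have := hbig h3
        omega
      obtain ⟨b, hb, hbS⟩ : ∃ b ∈ Cs f c, b ∉ S := by
        by_contra hcon
        push Not at hcon
        have h9 := Finset.card_le_card (show Cs f c ⊆ S from hcon)
        rw [h.lc.card_Cs] at h9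
        have := h.lc.three
        have : Sw.card = 3 := by omega
        rw [this] at hcount
        omega
      obtain ⟨p, q, hp, hq, hpS, hqS, hpq⟩ := h.sep S H hScard3 ⟨a, ha, haS⟩
        ⟨b, fun hh => h.out _ hh hb, hbS⟩
      have hqC : q ∈ Cs f c := (h.closed p hp q hpq).resolve_left hq
      rcases hScov q hqC p hp hpq.symm with hh | hh
      · exact hqS hh
      · exact hpS hh
    obtain ⟨E, rfl⟩ := Nat.exists_eq_add_of_le hD2
    have : 4 * E ≤ E * Sw.card := by rw [mul_comm]; exact Nat.mul_le_mul_left _ hs4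
    have : (2 + E) * Sw.card = 2 * Sw.card + E * Sw.card := by ring
    omega
  · have : D = 2 := by omega
    subst this
    omega

theorem claimE (h : HC G f c δ H) : ∀ (n : ℕ) (K : Finset V) (x u : V), K.card ≤ n → K ⊆ H → x ∈ H →
    x ∉ K → K.Nonempty → (∀ k ∈ K, ∀ e ∈ H, G.Adj k e → e ∈ K ∨ e = x) →
    (∀ a ∈ K, ∀ b ∈ K, RU G K a b) → (∃ k ∈ K, G.Adj k x) → u ∈ Cs f c →
    ∃ a ∈ K, (∃ u' ∈ Cs f c, u' ≠ u ∧ G.Adj a u') ∧ ∃ L, PL G a L x ∧ (∀ z ∈ L, z ∈ insert x K) ∧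
      2 ≤ L.length ∧ δ + 1 ≤ L.length + ((Cs f c).filter (G.Adj a)).card := by
  intro n
  induction n with
  | zero =>
    intro K x u hK _ _ _ hne
    have := Finset.card_pos.2 hne
    omega
  | succ n ih =>
    intro K x u hKn hKH hxH hxK hne hclose hconn ⟨k0, hk0, hk0x⟩ hu
    have hdegK : ∀ v ∈ K, δ ≤ ((Cs f c).filter (G.Adj v)).card +
        ((insert x K).filter (G.Adj v)).card := by
      intro v hv
      have h1 := h.deg v (hKH hv)
      have : H.filter (G.Adj v) ⊆ (insert x K).filter (G.Adj v) := by
        intro z hz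
        rw [Finset.mem_filter] at hz ⊢
        refine ⟨?_, hz.2⟩
        rw [Finset.mem_insert]
        have := hclose v hv z hz.1 hz.2
        tauto
      have := Finset.card_le_card this
      omega
    by_cases h2 : ∀ y ∈ K, ∀ v ∈ K, v ≠ y → RU G ((insert x K).erase y) v x
    · -- choose a
      obtain ⟨a, haK, hamax, u', hu'C, hu'u, hau'⟩ : ∃ a ∈ K,
          (∀ v ∈ K, ((Cs f c).filter (G.Adj v)).card ≤ ((Cs f c).filter (G.Adj a)).card) ∧
          ∃ u' ∈ Cs f c, u' ≠ u ∧ G.Adj a u' := by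
        obtain ⟨m, hmK, hmmax⟩ := Finset.exists_max_image K
          (fun z => ((Cs f c).filter (G.Adj z)).card) hne
        by_cases hm : 2 ≤ ((Cs f c).filter (G.Adj m)).card
        · obtain ⟨u', hu', hne'⟩ := Finset.exists_mem_ne (show 1 < _ from hm) u
          rw [Finset.mem_filter] at hu'
          exact ⟨m, hmK, hmmax, u', hu'.1, hne', hu'.2⟩
        · obtain ⟨b, hb, hbu⟩ := h.lc.two_more u
          obtain ⟨p, q, hp, hq, hpS, hqS, hpq⟩ := h.sep {x, u} K
            (Finset.card_le_two.trans_lt (by omega))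
            ⟨k0, hk0, by
              simp only [Finset.mem_insert, Finset.mem_singleton]
              rintro (hh | hh)
              · exact hxK (hh ▸ hk0)
              · exact h.out k0 (hKH hk0) (hh ▸ hu)⟩
            ⟨b, fun hh => h.out _ (hKH hh) hb, by
              simp only [Finset.mem_insert, Finset.mem_singleton]
              rintro (hh | hh)
              · exact h.out x hxH (hh ▸ hb)
              · exact hbu hh⟩
          simp only [Finset.mem_insert, Finset.mem_singleton, not_or] at hpS hqS
          have hqC : q ∈ Cs f c := by
            rcases h.closed p (hKH hp) q hpq with hh | hh
            · rcases hclose p hp q hh hpq with hh | hh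
              · exact absurd hh hq
              · exact absurd hh hqS.1
            · exact hh
          refine ⟨p, hp, ?_, q, hqC, hqS.2, hpq⟩
          intro v hv
          have h1 := hmmax v hv
          have h3 : 0 < ((Cs f c).filter (G.Adj p)).card :=
            Finset.card_pos.2 ⟨q, Finset.mem_filter.2 ⟨hqC, hpq⟩⟩
          omega
      refine ⟨a, haK, ⟨u', hu'C, hu'u, hau'⟩, ?_⟩
      have hax : a ≠ x := by rintro rfl; exact hxK haK
      by_cases hz : ∃ z ∈ K, z ≠ a
      · obtain ⟨z, hzK, hza⟩ := hz
        obtain ⟨L, hL, hLU, h5, h6⟩ := LL G _ (insert x K) a x a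
          (δ - ((Cs f c).filter (G.Adj a)).card) le_rfl (by
            refine ⟨by simp [haK], by simp, hax, ?_⟩
            intro y hy v hv hvy
            rw [Finset.mem_insert] at hv
            rcases hv with rfl | hvK
            · right; exact .refl (by simp [hvy])
            · rw [Finset.mem_insert] at hy
              rcases hy with rfl | hyK
              · left
                refine (hconn v hvK a haK).mono ?_
                intro z hz
                rw [Finset.mem_erase, Finset.mem_insert]
                refine ⟨?_, .inr hz⟩
                rintro rfl
                exact hxK hz
              · right; exact h2 y hyK v hvK hvy) (by
            intro v hv hva hvx _
            have hvK : v ∈ K := by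
              rw [Finset.mem_insert] at hv; tauto
            have h7 := hdegK v hvK
            have h8 := hamax v hvK
            omega) ⟨z, by simp [hzK], hza, by rintro rfl; exact hxK hzK, hza⟩
        exact ⟨L, hL, hLU, by omega, by omega⟩
      · push Not at hz
        have hk0a := hz k0 hk0
        subst hk0a
        refine ⟨[k0] ++ [x], (PL.single G k0).append (PL.single G x) hk0x (by simpa using hax),
          ?_, by simp, ?_⟩
        · intro z hz'
          simp at hz'
          rw [Finset.mem_insert]
          rcases hz' with rfl | rfl
          · exact .inr hk0
          · exact .inl rfl
        · have h7 := hdegK k0 hk0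
          have : (insert x K).filter (G.Adj k0) ⊆ {x} := by
            intro z hz'
            rw [Finset.mem_filter, Finset.mem_insert] at hz'
            rcases hz' with ⟨rfl | hzK, hadj⟩
            · simp
            · have := hz z hzK
              subst this
              exact absurd hadj (G.loopless.irrefl _)
          have := Finset.card_le_card this
          simp at this
          simp
          omega
    · push Not at h2
      obtain ⟨y, hyK, v, hvK, hvy, hnot⟩ := h2
      set B := (insert x K).erase y with hB
      set K' := B.filter (fun z => RU G B v z) with hK'
      have memK' : ∀ z, z ∈ K' ↔ RU G B v z := by
        intro z
        rw [hK', Finset.mem_filter]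
        exact ⟨fun h => h.2, fun h => ⟨h.right, h⟩⟩
      have hxK' : x ∉ K' := by rw [memK']; exact hnot
      have hyK' : y ∉ K' := by
        rw [memK']; intro hh; have := hh.right; simp [hB] at this
      have hK'K : K' ⊆ K := by
        intro z hz
        have h1 := (Finset.mem_filter.1 hz).1
        rw [hB, Finset.mem_erase, Finset.mem_insert] at h1
        rcases h1.2 with rfl | h1
        · exact absurd hz hxK'
        · exact h1
      have hvK' : v ∈ K' := by
        rw [memK']; exact .refl (by rw [hB, Finset.mem_erase, Finset.mem_insert]; tauto)
      have hcl' : ∀ k ∈ K', ∀ e ∈ H, G.Adj k e → e ∈ K' ∨ e = y := by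
        intro k hk e he hke
        by_cases hey : e = y
        · exact .inr hey
        left
        have h1 := hclose k (hK'K hk) e he hke
        rw [memK'] at hk ⊢
        refine hk.step hke ?_
        rw [hB, Finset.mem_erase, Finset.mem_insert]
        tauto
      have hlt : K'.card < K.card :=
        Finset.card_lt_card ((Finset.ssubset_iff_of_subset hK'K).2 ⟨y, hyK, hyK'⟩)
      obtain ⟨a, haK', hau, L, hL, hLK, hL2, hLδ⟩ := ih K' y u (by omega) (hK'K.trans hKH) (hKH hyK)
        hyK' ⟨v, hvK'⟩ hcl' (by
          intro a ha b hb
          rw [memK'] at ha hb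
          exact (comp_conn ha).symm.trans (comp_conn hb)) (by
          obtain ⟨k, e, hk, he, heK', hke, _⟩ := (hconn v hvK y hyK).exit hvK' hyK'
          rcases hcl' k hk e (hKH he) hke with hh | rfl
          · exact absurd hh heK'
          · exact ⟨k, hk, hke⟩) hu
      refine ⟨a, hK'K haK', hau, ?_⟩
      have hyx : RU G (insert x K) y x :=
        ((hconn y hyK k0 hk0).mono (fun z hz => by simp [hz])).step hk0x (by simp)
      obtain ⟨L2, hL2', hL2K⟩ := hyx.tail_avoid hyK' (by
        intro k hk hkx
        rw [memK'] at hk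
        exact hnot (hk.trans hkx))
      refine ⟨L ++ L2.tail, hL.glue hL2' ?_, ?_, ?_, ?_⟩
      · intro z hz hz2
        have h1 := hLK z hz
        have h3 := hL2K z hz2
        rw [Finset.mem_insert] at h1
        tauto
      · intro z hz
        rw [List.mem_append] at hz
        rcases hz with hz | hz
        · have := hLK z hz
          rw [Finset.mem_insert] at this ⊢
          rcases this with rfl | this
          · exact .inr hyK
          · exact .inr (hK'K this)
        · exact (hL2K z (List.mem_of_mem_tail hz)).1
      · simp; omega
      · simp; omega

theorem cutVertex (h : HC G f c δ H) {y a b : V} (hy : y ∈ H) (ha : a ∈ H) (hb : b ∈ H)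
    (hay : a ≠ y) (hby : b ≠ y) (hnot : ¬ RU G (H.erase y) a b) : 4 * δ ≤ c + 4 := by
  have comp : ∀ v ∈ H, v ≠ y → ∀ u ∈ Cs f c, ∃ a, RU G (H.erase y) v a ∧
      (∃ u' ∈ Cs f c, u' ≠ u ∧ G.Adj a u') ∧ ∃ L, PL G a L y ∧
      (∀ z ∈ L, z = y ∨ RU G (H.erase y) v z) ∧
      2 ≤ L.length ∧ δ + 1 ≤ L.length + ((Cs f c).filter (G.Adj a)).card := by
    intro v hv hvy u hu
    set K := (H.erase y).filter (fun z => RU G (H.erase y) v z) with hK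
    have memK : ∀ z, z ∈ K ↔ RU G (H.erase y) v z := by
      intro z
      rw [hK, Finset.mem_filter]
      exact ⟨fun h => h.2, fun h => ⟨h.right, h⟩⟩
    have hKH : K ⊆ H := fun z hz => (Finset.mem_erase.1 (Finset.mem_filter.1 hz).1).2
    have hyK : y ∉ K := by
      rw [memK]; intro hh; have := hh.right; simp at this
    have hvK : v ∈ K := by
      rw [memK]; exact .refl (by rw [Finset.mem_erase]; exact ⟨hvy, hv⟩)
    have hcl : ∀ k ∈ K, ∀ e ∈ H, G.Adj k e → e ∈ K ∨ e = y := by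
      intro k hk e he hke
      by_cases hey : e = y
      · exact .inr hey
      left
      rw [memK] at hk ⊢
      exact hk.step hke (Finset.mem_erase.2 ⟨hey, he⟩)
    obtain ⟨a, haK, hau, L, hL, hLK, h1, h2⟩ := h.claimE K.card K y u le_rfl hKH hy hyK ⟨v, hvK⟩ hcl
      (by
        intro a ha b hb
        rw [memK] at ha hb
        exact (comp_conn ha).symm.trans (comp_conn hb)) (by
        obtain ⟨k, e, hk, he, heK, hke, _⟩ := (h.conn v hv y hy).exit hvK hyK
        rcases hcl k hk e he hke with hh | rfl
        · exact absurd hh heK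
        · exact ⟨k, hk, hke⟩) hu
    refine ⟨a, (memK a).1 haK, hau, L, hL, ?_, h1, h2⟩
    intro z hz
    have := hLK z hz
    rw [Finset.mem_insert, memK] at this
    exact this
  obtain ⟨h2, hbh2, ⟨u2, hu2C, _, h2u2⟩, L2, hL2, hL2K, hl2, hδ2⟩ := comp b hb hby _ (h.lc.f_mem 0)
  obtain ⟨h1, hah1, ⟨u1, hu1C, hu12, h1u1⟩, L1, hL1, hL1K, hl1, hδ1⟩ := comp a ha hay u2 hu2C
  have herase : ∀ z ∈ H.erase y, z ∉ Cs f c := fun z hz => h.out z (Finset.mem_erase.1 hz).2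
  have h1o := herase _ hah1.right
  have h2o := herase _ hbh2.right
  have hdis : ∀ z, RU G (H.erase y) a z → ¬ RU G (H.erase y) b z :=
    fun z hz hz' => hnot (hz.trans hz'.symm)
  have h12 : h1 ≠ h2 := by rintro rfl; exact hdis _ hah1 hbh2
  have hP : PL G h1 (L1 ++ L2.reverse.tail) h2 := by
    refine hL1.glue hL2.reverse ?_
    intro z hz hz'
    rw [List.mem_reverse] at hz'
    rcases hL1K z hz with hh | hh
    · exact hh
    · rcases hL2K z hz' with hh' | hh'
      · exact hh'
      · exact absurd hh' (hdis z hh)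
  set L := L1 ++ L2.reverse.tail with hLdef
  have hlen : L.length = L1.length + L2.length - 1 := by
    rw [hLdef]; simp; omega
  have hLo : ∀ z ∈ L, z ∉ Cs f c := by
    intro z hz
    rw [hLdef, List.mem_append] at hz
    rcases hz with hz | hz
    · rcases hL1K z hz with rfl | hh
      · exact h.out _ hy
      · exact herase _ hh.right
    · have hz' := List.mem_reverse.1 (List.mem_of_mem_tail hz)
      rcases hL2K z hz' with rfl | hh
      · exact h.out _ hy
      · exact herase _ hh.right
  obtain ⟨D, hD⟩ : ∃ D, D + 1 = L.length := ⟨L.length - 1, by omega⟩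
  have hc : D + 2 ≤ c := h.lc.long_of hP hLo (by omega) hu1C hu2C hu12 h1u1.symm h2u2.symm
  obtain ⟨N, Sw, hN, hcount, hSw, S, hScard, hScov⟩ := h.lc.switch {h1, h2} (by
    intro t ht
    simp only [Finset.mem_insert, Finset.mem_singleton] at ht
    rcases ht with rfl | rfl
    · exact h1o
    · exact h2o) D (by
    intro p hp q hq hpq
    simp only [Finset.mem_insert, Finset.mem_singleton] at hp hq
    rcases hp with rfl | rfl <;> rcases hq with rfl | rfl
    · exact absurd rfl hpq
    · exact ⟨L, hP, hLo, by omega⟩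
    · exact ⟨L.reverse, hP.reverse, fun z hz => hLo z (List.mem_reverse.1 hz), by simp; omega⟩
    · exact absurd rfl hpq) hc
  have hs2 : 2 ≤ Sw.card := by
    by_contra hs
    have hS1 : S.card ≤ 1 := by omega
    rw [Finset.card_le_one] at hS1
    rcases hScov u1 hu1C h1 (by simp) h1u1.symm with p | p <;>
      rcases hScov u2 hu2C h2 (by simp) h2u2.symm with q | q <;>
      have e := hS1 _ p _ q
    · exact hu12 e
    · exact h2o (e ▸ hu1C)
    · exact h1o (e ▸ hu2C)
    · exact h12 e
  set X := (Cs f c).filter (G.Adj h1) with hX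
  set Y := (Cs f c).filter (G.Adj h2) with hY
  have hXYN : X ∪ Y ⊆ N := by
    intro z hz
    rw [hN]
    rw [Finset.mem_union] at hz
    rcases hz with hz | hz
    · rw [hX, Finset.mem_filter] at hz
      exact ⟨hz.1, h1, by simp, hz.2.symm⟩
    · rw [hY, Finset.mem_filter] at hz
      exact ⟨hz.1, h2, by simp, hz.2.symm⟩
  have hXYS : X ∩ Y ⊆ Sw := by
    intro z hz
    rw [Finset.mem_inter, hX, hY, Finset.mem_filter, Finset.mem_filter] at hz
    exact hSw z hz.1.1 h1 (by simp) h2 (by simp) h12 hz.1.2.symm hz.2.2.symm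
  have e1 := Finset.card_union_add_card_inter X Y
  have e2 := Finset.card_le_card hXYN
  have e3 := Finset.card_le_card hXYS
  obtain ⟨E, hE⟩ : ∃ E, D = 2 + E := ⟨D - 2, by omega⟩
  subst hE
  have : 2 * E ≤ E * Sw.card := by rw [mul_comm]; exact Nat.mul_le_mul_left _ hs2
  have : (2 + E) * Sw.card = 2 * Sw.card + E * Sw.card := by ring
  omega

end HC

theorem partA [Fintype V] {G : SimpleGraph V} {f : ℕ → V} {c δ : ℕ} (h : LC G f c) (hs : NoSep G 4)
    (hδ : ∀ v, δ ≤ (Finset.univ.filter (G.Adj v)).card) {a b d : V} (ha : a ∉ Cs f c)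
    (hb : b ∉ Cs f c) (hd : d ∉ Cs f c) (hab : G.Adj a b) (hbd : G.Adj b d) (had : a ≠ d) :
    4 * δ ≤ c + 8 := by
  set A := (Cs f c)ᶜ with hA
  have memA : ∀ z, z ∈ A ↔ z ∉ Cs f c := by intro z; rw [hA, Finset.mem_compl]
  set H := A.filter (fun z => RU G A b z) with hH
  have memH : ∀ z, z ∈ H ↔ RU G A b z := by
    intro z
    rw [hH, Finset.mem_filter]
    exact ⟨fun h => h.2, fun h => ⟨h.right, h⟩⟩
  have hbb : RU G A b b := .refl ((memA b).2 hb)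
  have ctx : HC G f c δ H := by
    have hcl : ∀ p ∈ H, ∀ q, G.Adj p q → q ∈ H ∨ q ∈ Cs f c := by
      intro p hp q hpq
      by_cases hq : q ∈ Cs f c
      · exact .inr hq
      · left
        rw [memH] at hp ⊢
        exact hp.step hpq ((memA q).2 hq)
    refine ⟨h, ?_, hcl, ?_, ?_, hs⟩
    · intro z hz; exact (memA z).1 (Finset.mem_filter.1 hz).1
    · intro p hp q hq
      rw [memH] at hp hq
      exact (comp_conn hp).symm.trans (comp_conn hq)
    · intro z hz
      refine (hδ z).trans (le_trans (Finset.card_le_card ?_) (Finset.card_union_le _ _))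
      intro w hw
      rw [Finset.mem_filter] at hw
      rw [Finset.mem_union, Finset.mem_filter, Finset.mem_filter]
      have := hcl z hz w hw.2
      tauto
  by_cases h2 : ∀ y ∈ H, ∀ u ∈ H, ∀ v ∈ H, u ≠ y → v ≠ y → RU G (H.erase y) u v
  · refine ctx.twoConn ?_ h2
    have : ({a, b, d} : Finset V) ⊆ H := by
      intro z hz
      simp only [Finset.mem_insert, Finset.mem_singleton] at hz
      rw [memH]
      rcases hz with rfl | rfl | rfl
      · exact hbb.step hab.symm ((memA _).2 ha)
      · exact hbb
      · exact hbb.step hbd ((memA _).2 hd)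
    have h3 := Finset.card_le_card this
    rw [Finset.card_eq_three.2 ⟨a, b, d, hab.ne, had, hbd.ne, rfl⟩] at h3
    exact h3
  · push Not at h2
    obtain ⟨y, hy, u, hu, v, hv, h5, h6, h7⟩ := h2
    have := ctx.cutVertex hy hu hv h5 h6 h7
    omega

end

section
open scoped Classical

/-- the facts on an edge `xy` outside the longest cycle `C` used in the second part. -/
structure BF (G : SimpleGraph V) (C N M : Finset V) (σ : V → V) (x y : V) : Prop where
  hx : x ∉ C
  hy : y ∉ C
  hxy : G.Adj x y
  NC : N ⊆ C
  MN : M ⊆ N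
  memN : ∀ u ∈ C, u ∈ N ↔ G.Adj u x ∨ G.Adj u y
  memM : ∀ u ∈ M, G.Adj u x ∧ G.Adj u y
  σC : ∀ u ∈ C, σ u ∈ C
  σinj : ∀ u ∈ C, ∀ v ∈ C, σ u = σ v → u = v
  σadj : ∀ u ∈ C, G.Adj u (σ u)
  p3 : ∀ a b d, a ∉ C → b ∉ C → d ∉ C → G.Adj a b → G.Adj b d → a = d
  F1 : ∀ u ∈ N, σ u ∉ N
  F2 : ∀ u ∈ M, σ (σ u) ∉ N
  B1 : ∀ u ∈ N, ∀ v ∈ N, u ≠ v → ¬ G.Adj (σ u) (σ v)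
  B2 : ∀ u ∈ N, ∀ v ∈ N, u ≠ v → (u ∈ M ∨ v ∈ M) → σ (σ v) ∉ N → ¬ G.Adj (σ u) (σ (σ v))
  Z1 : ∀ z z', z ∉ C → z' ∉ C → z ≠ x → z ≠ y → z' ≠ x → z' ≠ y → (z = z' ∨ G.Adj z z') →
    ∀ u ∈ N, ∀ v ∈ N, u ≠ v → G.Adj z (σ u) → ¬ G.Adj z' (σ v)
  Z2 : ∀ z z', z ∉ C → z' ∉ C → z ≠ x → z ≠ y → z' ≠ x → z' ≠ y → (z = z' ∨ G.Adj z z') →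
    ∀ u ∈ N, ∀ v ∈ N, u ≠ v → σ (σ v) ∉ N → G.Adj z (σ u) → ¬ G.Adj z' (σ (σ v))
  Z3 : ∀ z z', z ∉ C → z' ∉ C → z ≠ x → z ≠ y → z' ≠ x → z' ≠ y → (z = z' ∨ G.Adj z z') →
    ∀ u ∈ M, ∀ v ∈ M, u ≠ v → G.Adj z (σ (σ u)) → ¬ G.Adj z' (σ (σ v))
  Z4 : ∀ z z', z ∉ C → z' ∉ C → (z = z' ∨ G.Adj z z') →
    ∀ u ∈ C, G.Adj z u → ¬ G.Adj z' (σ u)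

theorem link_zz {G : SimpleGraph V} {z z' u v : V} (h : z = z' ∨ G.Adj z z') (hu : G.Adj z u)
    (hv : G.Adj z' v) : ∃ R, Lk G u R v ∧ (∀ r ∈ R, r = z ∨ r = z') ∧ 1 ≤ R.length ∧
      (z ≠ z' → R.length = 2) := by
  by_cases he : z = z'
  · subst he
    exact ⟨[z], .inr ⟨z, z, PL.single G z, hu.symm, hv⟩, by simp, by simp, fun h => absurd rfl h⟩
  · have ha := h.resolve_left he
    refine ⟨[z] ++ [z'], .inr ⟨z, z', (PL.single G z).append (PL.single G z') ha (by simpa using he),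
      hu.symm, hv⟩, by simp, by simp, by simp⟩

theorem LC.BF {G : SimpleGraph V} {f : ℕ → V} {c : ℕ} (h : LC G f c) {x y : V} {σ : V → V}
    (hσ : ∀ i, σ (f i) = f (i + 1)) (hx : x ∉ Cs f c) (hy : y ∉ Cs f c) (hxy : G.Adj x y)
    (p3 : ∀ a b d, a ∉ Cs f c → b ∉ Cs f c → d ∉ Cs f c → G.Adj a b → G.Adj b d → a = d) :
    BF G (Cs f c) ((Cs f c).filter (G.Adj x) ∪ (Cs f c).filter (G.Adj y))
      ((Cs f c).filter (G.Adj x) ∩ (Cs f c).filter (G.Adj y)) σ x y := by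
  have h3 := h.three
  set C := Cs f c with hC
  set N := C.filter (G.Adj x) ∪ C.filter (G.Adj y) with hN
  set M := C.filter (G.Adj x) ∩ C.filter (G.Adj y) with hM
  have memN : ∀ u, u ∈ N ↔ u ∈ C ∧ (G.Adj x u ∨ G.Adj y u) := by
    intro u
    simp only [hN, Finset.mem_union, Finset.mem_filter]
    tauto
  have memM : ∀ u, u ∈ M ↔ u ∈ C ∧ (G.Adj x u ∧ G.Adj y u) := by
    intro u
    simp only [hM, Finset.mem_inter, Finset.mem_filter]
    tauto
  have MN : ∀ u ∈ M, u ∈ N := by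
    intro u hu; rw [memM] at hu; rw [memN]; tauto
  have hout : ∀ z, z ∉ C → ∀ j, f j ≠ z := by
    intro z hz j hj
    exact hz (h.mem_Cs.2 ⟨j, hj⟩)
  have linkN : ∀ u ∈ N, ∀ v ∈ N, ∃ R, Lk G u R v ∧ (∀ r ∈ R, r = x ∨ r = y) ∧ 1 ≤ R.length ∧
      (u ∈ M ∨ v ∈ M → R.length = 2) := by
    have hne : x ≠ y := hxy.ne
    have two : ∀ u v, (G.Adj x u ∧ G.Adj y v) ∨ (G.Adj y u ∧ G.Adj x v) → ∃ R, Lk G u R v ∧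
        (∀ r ∈ R, r = x ∨ r = y) ∧ R.length = 2 := by
      rintro u v (⟨h1, h2⟩ | ⟨h1, h2⟩)
      · obtain ⟨R, a, b, _, d⟩ := link_zz (.inr hxy) h1 h2
        exact ⟨R, a, b, d hne⟩
      · obtain ⟨R, a, b, _, d⟩ := link_zz (.inr hxy.symm) h1 h2
        exact ⟨R, a, fun r hr => (b r hr).symm, d hne.symm⟩
    intro u hu v hv
    rw [memN] at hu hv
    by_cases hh : (G.Adj x u ∧ G.Adj y v) ∨ (G.Adj y u ∧ G.Adj x v)
    · obtain ⟨R, a, b, d⟩ := two u v hh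
      exact ⟨R, a, b, by omega, fun _ => d⟩
    · have hnm : ¬ (u ∈ M ∨ v ∈ M) := by
        rw [memM, memM]; tauto
      have : (G.Adj x u ∧ G.Adj x v) ∨ (G.Adj y u ∧ G.Adj y v) := by tauto
      rcases this with ⟨h1, h2⟩ | ⟨h1, h2⟩
      · obtain ⟨R, a, b, e, d⟩ := link_zz (.inl rfl) h1 h2
        exact ⟨R, a, fun r hr => .inl ((b r hr).elim id id), e, fun h => absurd h hnm⟩
      · obtain ⟨R, a, b, e, d⟩ := link_zz (.inl rfl) h1 h2
        exact ⟨R, a, fun r hr => .inr ((b r hr).elim id id), e, fun h => absurd h hnm⟩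
  have houtxy : ∀ R : List V, (∀ r ∈ R, r = x ∨ r = y) → ∀ r ∈ R, ∀ j, f j ≠ r := by
    intro R hR r hr
    rcases hR r hr with rfl | rfl
    · exact hout _ hx
    · exact hout _ hy
  have NC : ∀ u ∈ N, u ∈ C := fun u hu => ((memN u).1 hu).1
  have F1 : ∀ u ∈ N, σ u ∉ N := by
    intro u hu hu'
    obtain ⟨i, rfl⟩ := h.mem_Cs.1 (NC u hu)
    rw [hσ] at hu'
    obtain ⟨R, hR, hRo, hR1, _⟩ := linkN _ hu _ hu'
    have := h.L1 (by omega) (by omega) hR (houtxy R hRo)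
    omega
  have F2 : ∀ u ∈ M, σ (σ u) ∉ N := by
    intro u hu hu'
    obtain ⟨i, rfl⟩ := h.mem_Cs.1 (NC u (MN u hu))
    rw [hσ, hσ] at hu'
    obtain ⟨R, hR, hRo, hR1, hR2⟩ := linkN _ (MN _ hu) _ hu'
    have e := hR2 (.inl hu)
    have := h.L1 (i := i) (k := 2) (by omega) (by omega) hR (houtxy R hRo)
    omega
  -- crossing
  have cross : ∀ i s a b R2, 0 < s → 1 ≤ a → a ≤ s → 1 ≤ b → s + b < c → f i ∈ N → f (i + s) ∈ N →
      Lk G (f (i + a)) R2 (f (i + s + b)) → (∀ r ∈ R2, r ∉ C ∧ r ≠ x ∧ r ≠ y) →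
      R2.length + 3 ≤ a + b ∧ ((f i ∈ M ∨ f (i + s) ∈ M) → R2.length + 4 ≤ a + b) := by
    intro i s a b R2 hs ha has hb hsb hi his hl hR2
    obtain ⟨R, hR, hRo, hR1, hR2'⟩ := linkN _ hi _ his
    have := h.L2 ha has hb hsb hR hl (houtxy R hRo) (fun r hr => hout r (hR2 r hr).1) (by
      intro r hr hr'
      have h1 := hRo r hr
      have h2 := hR2 r hr'
      tauto)
    refine ⟨by omega, fun hm => ?_⟩
    have := hR2' hm
    omega
  -- normal form for a pair of vertices of N
  have pair : ∀ u ∈ N, ∀ v ∈ N, u ≠ v → ∃ i s, f i = u ∧ f (i + s) = v ∧ 0 < s ∧ s + 1 < c ∧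
      σ u = f (i + 1) ∧ σ v = f (i + s + 1) ∧ 2 ≤ s ∧ (σ (σ v) ∉ N → s + 2 < c) := by
    intro u hu v hv huv
    obtain ⟨i, rfl⟩ := h.mem_Cs.1 (NC u hu)
    obtain ⟨s, hs0, hsc, rfl⟩ := h.fwd' i (NC v hv) huv.symm
    have h1 : s + 1 ≠ c := by
      intro e
      apply F1 _ hv
      rw [hσ, add_assoc, e, h.per]; exact hu
    refine ⟨i, s, rfl, rfl, hs0, by omega, hσ _, hσ _, ?_, ?_⟩
    · by_contra hlt
      have : s = 1 := by omega
      subst this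
      exact F1 _ hu (by rw [hσ]; exact hv)
    · intro hn
      have : s + 2 ≠ c := by
        intro e
        apply hn
        rw [hσ, hσ]
        have : i + s + 1 + 1 = i + c := by omega
        rw [this, h.per]; exact hu
      omega
  refine ⟨hx, hy, hxy, NC, MN, ?_, ?_, ?_, ?_, ?_, p3, F1, F2, ?_, ?_, ?_, ?_, ?_, ?_⟩
  · intro u hu
    rw [memN, G.adj_comm x, G.adj_comm y]; tauto
  · intro u hu
    rw [memM, G.adj_comm x, G.adj_comm y] at hu; tauto
  · intro u hu
    obtain ⟨i, rfl⟩ := h.mem_Cs.1 hu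
    rw [hσ]; exact h.f_mem _
  · intro u hu v hv he
    obtain ⟨i, rfl⟩ := h.mem_Cs.1 hu
    obtain ⟨j, rfl⟩ := h.mem_Cs.1 hv
    rw [hσ, hσ] at he
    exact h.cancel he
  · intro u hu
    obtain ⟨i, rfl⟩ := h.mem_Cs.1 hu
    rw [hσ]; exact h.adj _
  · intro u hu v hv huv hadj
    obtain ⟨i, s, rfl, rfl, hs, hsc, e1, e2, _⟩ := pair u hu v hv huv
    rw [e1, e2] at hadj
    have := (cross i s 1 1 [] hs le_rfl (by omega) le_rfl hsc hu hv (.inl ⟨rfl, hadj⟩) (by simp)).1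
    omega
  · intro u hu v hv huv hm hn hadj
    obtain ⟨i, s, rfl, rfl, hs, hsc, e1, e2, _, hh⟩ := pair u hu v hv huv
    have hh' := hh hn
    rw [e1, e2, hσ] at hadj
    have := (cross i s 1 2 [] hs le_rfl (by omega) (by omega) hh' hu hv (.inl ⟨rfl, hadj⟩)
      (by simp)).2 hm
    simp at this
  · intro z z' hz hz' h1 h2 h1' h2' hzz u hu v hv huv ha hb
    obtain ⟨i, s, rfl, rfl, hs, hsc, e1, e2, _⟩ := pair u hu v hv huv
    rw [e1] at ha
    rw [e2] at hb
    obtain ⟨R, hR, hRz, hR1, _⟩ := link_zz hzz ha hb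
    have := (cross i s 1 1 R hs le_rfl (by omega) le_rfl hsc hu hv hR (by
      intro r hr; rcases hRz r hr with rfl | rfl <;> tauto)).1
    omega
  · intro z z' hz hz' h1 h2 h1' h2' hzz u hu v hv huv hn ha hb
    obtain ⟨i, s, rfl, rfl, hs, hsc, e1, e2, _, hh⟩ := pair u hu v hv huv
    have hh' := hh hn
    rw [e1] at ha
    rw [e2, hσ] at hb
    obtain ⟨R, hR, hRz, hR1, _⟩ := link_zz hzz ha hb
    have := (cross i s 1 2 R hs le_rfl (by omega) (by omega) hh' hu hv hR (by
      intro r hr; rcases hRz r hr with rfl | rfl <;> tauto)).1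
    omega
  · intro z z' hz hz' h1 h2 h1' h2' hzz u hu v hv huv ha hb
    obtain ⟨i, s, rfl, rfl, hs, hsc, e1, e2, hs2, hh⟩ := pair u (MN u hu) v (MN v hv) huv
    have hh' := hh (F2 _ hv)
    rw [e1, hσ] at ha
    rw [e2, hσ] at hb
    obtain ⟨R, hR, hRz, hR1, _⟩ := link_zz hzz ha hb
    have := (cross i s 2 2 R hs (by omega) (by omega) (by omega) hh' (MN _ hu) (MN _ hv) hR (by
      intro r hr; rcases hRz r hr with rfl | rfl <;> tauto)).2 (.inl hu)
    omega
  · intro z z' hz hz' hzz u hu ha hb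
    obtain ⟨i, rfl⟩ := h.mem_Cs.1 hu
    rw [hσ] at hb
    obtain ⟨R, hR, hRz, hR1, _⟩ := link_zz hzz ha hb
    have := h.L1 (i := i) (k := 1) (by omega) (by omega) hR (by
      intro r hr
      rcases hRz r hr with rfl | rfl
      · exact hout _ hz
      · exact hout _ hz')
    omega

end

section
open scoped Classical

/-- successors of `N` and second successors of `M`. -/
noncomputable def Bd (N M : Finset V) (σ : V → V) : Finset V :=
  N.image σ ∪ M.image (fun u => σ (σ u))

/-- the remaining vertices of the cycle. -/
noncomputable def Gd (C N M : Finset V) (σ : V → V) : Finset V := (C \ N) \ Bd N M σ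

/-- outside vertices other than `x`, `y`. -/
noncomputable def Oo [Fintype V] (C : Finset V) (x y : V) : Finset V :=
  Finset.univ.filter (fun v => v ∉ C ∧ v ≠ x ∧ v ≠ y)

/-- a vertex cut. -/
structure Cut (G : SimpleGraph V) (P Q S : Finset V) : Prop where
  pq : ∀ v ∈ P, v ∉ Q
  ps : ∀ v ∈ P, v ∉ S
  qs : ∀ v ∈ Q, v ∉ S
  cover : ∀ v, v ∈ P ∨ v ∈ Q ∨ v ∈ S
  noedge : ∀ p ∈ P, ∀ q ∈ Q, ¬ G.Adj p q
  neP : P.Nonempty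
  neQ : Q.Nonempty

theorem Cut.symm {G : SimpleGraph V} {P Q S : Finset V} (h : Cut G P Q S) : Cut G Q P S :=
  ⟨fun v hv hv' => h.pq v hv' hv, h.qs, h.ps, fun v => by have := h.cover v; tauto,
    fun p hp q hq hpq => h.noedge q hq p hp hpq.symm, h.neQ, h.neP⟩

theorem Cut.nbr {G : SimpleGraph V} {P Q S : Finset V} (h : Cut G P Q S) {p e : V} (hp : p ∈ P)
    (he : G.Adj p e) : e ∈ P ∨ e ∈ S := by
  rcases h.cover e with h1 | h1 | h1
  · exact .inl h1
  · exact absurd he (h.noedge p hp e h1)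
  · exact .inr h1

theorem Cut.nbr' {G : SimpleGraph V} {P Q S : Finset V} (h : Cut G P Q S) {p e : V} (hp : p ∈ Q)
    (he : G.Adj p e) : e ∈ Q ∨ e ∈ S := h.symm.nbr hp he

namespace BF
variable {G : SimpleGraph V} {C N M : Finset V} {σ : V → V} {x y : V}

theorem bad_cases {v : V} (hv : v ∈ Bd N M σ) :
    (∃ u ∈ N, σ u = v) ∨ (∃ u ∈ M, σ (σ u) = v) := by
  unfold Bd at hv
  rw [Finset.mem_union, Finset.mem_image, Finset.mem_image] at hv
  exact hv

theorem bad_sub (h : BF G C N M σ x y) {v : V} (hv : v ∈ Bd N M σ) : v ∈ C ∧ v ∉ N := by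
  rcases bad_cases hv with ⟨u, hu, rfl⟩ | ⟨u, hu, rfl⟩
  · exact ⟨h.σC _ (h.NC hu), h.F1 u hu⟩
  · exact ⟨h.σC _ (h.σC _ (h.NC (h.MN hu))), h.F2 u hu⟩

theorem count (h : BF G C N M σ x y) : 2 * N.card + M.card + (Gd C N M σ).card = C.card := by
  have e1 : (Bd N M σ).card = N.card + M.card := by
    unfold Bd
    rw [Finset.card_union_of_disjoint, Finset.card_image_of_injOn, Finset.card_image_of_injOn]
    · intro u hu v hv he
      have hu' := h.NC (h.MN hu)
      have hv' := h.NC (h.MN hv)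
      exact h.σinj _ hu' _ hv' (h.σinj _ (h.σC _ hu') _ (h.σC _ hv') he)
    · intro u hu v hv he
      exact h.σinj _ (h.NC hu) _ (h.NC hv) he
    · rw [Finset.disjoint_left]
      intro a ha hb
      rw [Finset.mem_image] at ha hb
      obtain ⟨u, hu, rfl⟩ := ha
      obtain ⟨v, hv, he⟩ := hb
      have := h.σinj _ (h.σC _ (h.NC (h.MN hv))) _ (h.NC hu) he
      exact h.F1 v (h.MN hv) (this ▸ hu)
  have e2 : (C \ N).card + N.card = C.card := Finset.card_sdiff_add_card_eq_card h.NC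
  have e3 : (Gd C N M σ).card + (Bd N M σ).card = (C \ N).card := by
    refine Finset.card_sdiff_add_card_eq_card ?_
    intro v hv
    have := h.bad_sub hv
    rw [Finset.mem_sdiff]; exact this
  omega

theorem bad1_succ (h : BF G C N M σ x y) {u : V} (hu : u ∈ N) :
    ((Bd N M σ).filter (G.Adj (σ u))).card ≤ 1 := by
  rw [Finset.card_le_one]
  have key : ∀ b ∈ (Bd N M σ).filter (G.Adj (σ u)), b = σ (σ u) := by
    intro b hb
    rw [Finset.mem_filter] at hb
    rcases bad_cases hb.1 with ⟨v, hv, rfl⟩ | ⟨v, hv, rfl⟩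
    · by_cases huv : u = v
      · subst huv; exact absurd hb.2 (G.loopless.irrefl _)
      · exact absurd hb.2 (h.B1 u hu v hv huv)
    · by_cases huv : u = v
      · subst huv; rfl
      · exact absurd hb.2 (h.B2 u hu v (h.MN hv) huv (.inr hv) (h.F2 v hv))
  intro a ha b hb
  rw [key a ha, key b hb]

theorem bad1_out (h : BF G C N M σ x y) {z z' : V} (hz : z ∉ C) (hz' : z' ∉ C) (h1 : z ≠ x)
    (h2 : z ≠ y) (h1' : z' ≠ x) (h2' : z' ≠ y) (hzz : z = z' ∨ G.Adj z z') :
    ((Bd N M σ).filter (fun b => G.Adj z b ∨ G.Adj z' b)).card ≤ 1 := by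
  rw [Finset.card_le_one]
  have key : ∀ a ∈ Bd N M σ, ∀ b ∈ Bd N M σ, ∀ w w', w ∉ C → w' ∉ C → w ≠ x → w ≠ y → w' ≠ x →
      w' ≠ y → (w = w' ∨ G.Adj w w') → G.Adj w a → G.Adj w' b → a = b := by
    intro a ha b hb w w' hw hw' h1 h2 h1' h2' hww hwa hwb
    have hww' : w' = w ∨ G.Adj w' w := hww.imp Eq.symm (fun h => h.symm)
    rcases bad_cases ha with ⟨u, hu, rfl⟩ | ⟨u, hu, rfl⟩ <;>
      rcases bad_cases hb with ⟨v, hv, rfl⟩ | ⟨v, hv, rfl⟩ <;>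
      by_cases huv : u = v
    · rw [huv]
    · exact absurd hwb (h.Z1 w w' hw hw' h1 h2 h1' h2' hww u hu v hv huv hwa)
    · subst huv
      exact absurd hwb (h.Z4 w w' hw hw' hww (σ u) (h.σC _ (h.NC hu)) hwa)
    · exact absurd hwb (h.Z2 w w' hw hw' h1 h2 h1' h2' hww u hu v (h.MN hv) huv (h.F2 v hv) hwa)
    · subst huv
      exact absurd hwa (h.Z4 w' w hw' hw hww' (σ u) (h.σC _ (h.NC hv)) hwb)
    · exact absurd hwa (h.Z2 w' w hw' hw h1' h2' h1 h2 hww' v hv u (h.MN hu) (Ne.symm huv)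
        (h.F2 u hu) hwb)
    · rw [huv]
    · exact absurd hwb (h.Z3 w w' hw hw' h1 h2 h1' h2' hww u hu v hv huv hwa)
  intro a ha b hb
  rw [Finset.mem_filter] at ha hb
  rcases ha.2 with p | p <;> rcases hb.2 with q | q
  · exact key a ha.1 b hb.1 z z hz hz h1 h2 h1 h2 (.inl rfl) p q
  · exact key a ha.1 b hb.1 z z' hz hz' h1 h2 h1' h2' hzz p q
  · exact key a ha.1 b hb.1 z' z hz' hz h1' h2' h1 h2 (hzz.imp Eq.symm (fun h => h.symm)) p q
  · exact key a ha.1 b hb.1 z' z' hz' hz' h1' h2' h1' h2' (.inl rfl) p q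

theorem noxy (h : BF G C N M σ x y) {w : V} (hw : w ∉ N) (h1 : w ≠ x) (h2 : w ≠ y) :
    ¬ G.Adj w x ∧ ¬ G.Adj w y := by
  by_cases hC : w ∈ C
  · have := h.memN w hC
    tauto
  · constructor
    · intro ha
      exact h2 (h.p3 w x y hC h.hx h.hy ha h.hxy)
    · intro ha
      exact h1 (h.p3 w y x hC h.hy h.hx ha h.hxy.symm)

theorem gd_mem {v : V} : v ∈ Gd C N M σ ↔ v ∈ C ∧ v ∉ N ∧ v ∉ Bd N M σ := by
  unfold Gd; rw [Finset.mem_sdiff, Finset.mem_sdiff]; tauto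

variable [Fintype V]

theorem oo_mem {v : V} : v ∈ Oo C x y ↔ v ∉ C ∧ v ≠ x ∧ v ≠ y := by
  unfold Oo; simp

/-- degree count for a vertex outside `N ∪ {x, y}`. -/
theorem degI (h : BF G C N M σ x y) {δ : ℕ} (hδ : ∀ v, δ ≤ (Finset.univ.filter (G.Adj v)).card)
    {P Q S : Finset V} (hc : Cut G P Q S) {w : V} (hwP : w ∈ P) (hw : w ∉ N) (h1 : w ≠ x)
    (h2 : w ≠ y) : δ ≤ (Gd C N M σ |>.filter (G.Adj w)).card + (Bd N M σ |>.filter (G.Adj w)).card +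
      (N ∩ P).card + (N ∩ S |>.filter (G.Adj w)).card + (Oo C x y |>.filter (G.Adj w)).card := by
  refine (hδ w).trans ?_
  have hsub : Finset.univ.filter (G.Adj w) ⊆ ((((Gd C N M σ).filter (G.Adj w) ∪
      (Bd N M σ).filter (G.Adj w)) ∪ (N ∩ P)) ∪ (N ∩ S).filter (G.Adj w)) ∪
      (Oo C x y).filter (G.Adj w) := by
    intro v hv
    rw [Finset.mem_filter] at hv
    have hv := hv.2
    have hvx : v ≠ x := by rintro rfl; exact (h.noxy hw h1 h2).1 hv
    have hvy : v ≠ y := by rintro rfl; exact (h.noxy hw h1 h2).2 hv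
    have := hc.nbr hwP hv
    simp only [Finset.mem_union, Finset.mem_filter, Finset.mem_inter, gd_mem, oo_mem]
    tauto
  refine (Finset.card_le_card hsub).trans ?_
  refine (Finset.card_union_le _ _).trans (Nat.add_le_add_right ?_ _)
  refine (Finset.card_union_le _ _).trans (Nat.add_le_add_right ?_ _)
  refine (Finset.card_union_le _ _).trans (Nat.add_le_add_right ?_ _)
  exact Finset.card_union_le _ _

/-- degree count for a test vertex. -/
theorem degT (h : BF G C N M σ x y) {δ : ℕ} (hδ : ∀ v, δ ≤ (Finset.univ.filter (G.Adj v)).card)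
    {P Q S : Finset V} (hc : Cut G P Q S) {w : V} (hwP : w ∈ P)
    (hw : w ∈ Oo C x y ∨ ∃ u ∈ N, σ u = w) :
    δ ≤ (Gd C N M σ |>.filter (G.Adj w)).card + 1 +
      (N ∩ P).card + (N ∩ S).card + (Oo C x y |>.filter (G.Adj w)).card := by
  have hb : ((Bd N M σ).filter (G.Adj w)).card ≤ 1 := by
    rcases hw with hw | ⟨u, hu, rfl⟩
    · rw [oo_mem] at hw
      have := h.bad1_out hw.1 hw.1 hw.2.1 hw.2.2 hw.2.1 hw.2.2 (.inl rfl)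
      simpa using this
    · exact h.bad1_succ hu
  have hne : w ∉ N ∧ w ≠ x ∧ w ≠ y := by
    rcases hw with hw | ⟨u, hu, rfl⟩
    · rw [oo_mem] at hw
      exact ⟨fun h' => hw.1 (h.NC h'), hw.2⟩
    · have := h.σC u (h.NC hu)
      exact ⟨h.F1 u hu, fun e => h.hx (e ▸ this), fun e => h.hy (e ▸ this)⟩
  have := h.degI hδ hc hwP hne.1 hne.2.1 hne.2.2
  have := Finset.card_filter_le (N ∩ S) (G.Adj w)
  omega

/-- the good neighbours stay on the side or in the cut -/
theorem good_side {P Q S : Finset V} (hc : Cut G P Q S) {w : V} (hwP : w ∈ P) :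
    (Gd C N M σ).filter (G.Adj w) ⊆ (Gd C N M σ).filter (fun v => v ∈ P ∨ v ∈ S) := by
  intro v hv
  rw [Finset.mem_filter] at hv ⊢
  exact ⟨hv.1, hc.nbr hwP hv.2⟩

/-- a side containing neither other outside vertices nor successors of `N`. -/
theorem T2 (h : BF G C N M σ x y) {δ : ℕ} (hδ : ∀ v, δ ≤ (Finset.univ.filter (G.Adj v)).card)
    {P Q S : Finset V} (hc : Cut G P Q S) (hO : ∀ v ∈ Oo C x y, v ∉ P) (hσ : ∀ u ∈ N, σ u ∉ P)
    (hI : ∃ p ∈ P, p ∈ C ∧ p ∉ N) :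
    δ ≤ (Gd C N M σ ∩ P).card + (N ∩ P).card + (N ∩ S).card + ((C \ N) ∩ S).card +
      (Oo C x y ∩ S).card := by
  have main : ∀ p ∈ P, p ∈ C → p ∉ N → ((M.filter (fun v => σ (σ v) ∈ P ∧ G.Adj p (σ (σ v)))).card
      + (((C \ N) ∩ S).filter (G.Adj p)).card ≤ ((C \ N) ∩ S).card) →
      δ ≤ (Gd C N M σ ∩ P).card + (N ∩ P).card + (N ∩ S).card + ((C \ N) ∩ S).card +
      (Oo C x y ∩ S).card := by
    intro p hp hpC hpN hle
    have hpx : p ≠ x := by rintro rfl; exact h.hx hpC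
    have hpy : p ≠ y := by rintro rfl; exact h.hy hpC
    have hsub : Finset.univ.filter (G.Adj p) ⊆ ((((Gd C N M σ ∩ P) ∪ (N ∩ P)) ∪ (N ∩ S)) ∪
        ((M.filter (fun v => σ (σ v) ∈ P ∧ G.Adj p (σ (σ v)))).image (fun v => σ (σ v)) ∪
          ((C \ N) ∩ S).filter (G.Adj p))) ∪ (Oo C x y ∩ S) := by
      intro v hv
      rw [Finset.mem_filter] at hv
      have hv := hv.2
      have hvx : v ≠ x := by rintro rfl; exact (h.noxy hpN hpx hpy).1 hv
      have hvy : v ≠ y := by rintro rfl; exact (h.noxy hpN hpx hpy).2 hv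
      have hside := hc.nbr hp hv
      have hOv := hO v
      rw [oo_mem] at hOv
      simp only [Finset.mem_union, Finset.mem_filter, Finset.mem_inter, gd_mem, oo_mem,
        Finset.mem_sdiff, Finset.mem_image]
      by_cases hvB : v ∈ Bd N M σ ∧ v ∈ P
      · rcases bad_cases hvB.1 with ⟨u, hu, rfl⟩ | ⟨u, hu, rfl⟩
        · exact absurd hvB.2 (hσ u hu)
        · left; right; left
          exact ⟨u, ⟨hu, hvB.2, hv⟩, rfl⟩
      · by_cases hvC : v ∈ C
        · by_cases hvN : v ∈ N
          · rcases hside with hs | hs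
            · left; left; left; right; exact ⟨hvN, hs⟩
            · left; left; right; exact ⟨hvN, hs⟩
          · rcases hside with hs | hs
            · left; left; left; left; exact ⟨⟨hvC, hvN, fun hb => hvB ⟨hb, hs⟩⟩, hs⟩
            · left; right; right; exact ⟨⟨⟨hvC, hvN⟩, hs⟩, hv⟩
        · right
          exact ⟨⟨hvC, hvx, hvy⟩, hside.resolve_left (hOv ⟨hvC, hvx, hvy⟩)⟩
    refine (hδ p).trans ((Finset.card_le_card hsub).trans ?_)
    refine (Finset.card_union_le _ _).trans (Nat.add_le_add_right ?_ _)
    refine (Finset.card_union_le _ _).trans ?_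
    refine Nat.add_le_add ?_ ?_
    · refine (Finset.card_union_le _ _).trans (Nat.add_le_add_right ?_ _)
      exact Finset.card_union_le _ _
    · refine (Finset.card_union_le _ _).trans (le_trans ?_ hle)
      exact Nat.add_le_add_right Finset.card_image_le _
  by_cases hu : ∃ u ∈ N, σ (σ u) ∈ P ∧ σ (σ u) ∉ N
  · obtain ⟨u, hu, huP, huN⟩ := hu
    have huC := h.σC _ (h.σC _ (h.NC hu))
    refine main _ huP huC huN ?_
    set A := M.filter (fun v => σ (σ v) ∈ P ∧ G.Adj (σ (σ u)) (σ (σ v))) with hA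
    have hinj : (A.image σ).card = A.card := by
      apply Finset.card_image_of_injOn
      intro a ha b hb he
      have ha' := (Finset.mem_filter.1 ha).1
      have hb' := (Finset.mem_filter.1 hb).1
      exact h.σinj _ (h.NC (h.MN ha')) _ (h.NC (h.MN hb')) he
    rw [← hinj, ← Finset.card_union_of_disjoint]
    · apply Finset.card_le_card
      intro a ha
      rw [Finset.mem_union] at ha
      rcases ha with ha | ha
      · obtain ⟨v, hv, rfl⟩ := Finset.mem_image.1 ha
        rw [hA, Finset.mem_filter] at hv
        have hvN := h.MN hv.1
        have hvC := h.σC _ (h.NC hvN)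
        rw [Finset.mem_inter, Finset.mem_sdiff]
        refine ⟨⟨hvC, h.F1 v hvN⟩, ?_⟩
        exact (hc.nbr hv.2.1 (h.σadj _ hvC).symm).resolve_left (hσ v hvN)
      · exact (Finset.mem_filter.1 ha).1
    · rw [Finset.disjoint_left]
      intro a ha hb
      obtain ⟨v, hv, rfl⟩ := Finset.mem_image.1 ha
      rw [hA, Finset.mem_filter] at hv
      rw [Finset.mem_filter] at hb
      by_cases huv : v = u
      · subst huv
        exact G.loopless.irrefl _ hv.2.2
      · exact h.B2 v (h.MN hv.1) u hu huv (.inl hv.1) huN hb.2.symm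
  · push Not at hu
    obtain ⟨p, hp, hpC, hpN⟩ := hI
    refine main p hp hpC hpN ?_
    have : M.filter (fun v => σ (σ v) ∈ P ∧ G.Adj p (σ (σ v))) = ∅ := by
      rw [Finset.filter_eq_empty_iff]
      intro v hv hv'
      exact h.F2 v hv (hu v (h.MN hv) hv'.1)
    rw [this]
    simpa using Finset.card_filter_le _ _

end BF

end

section
open scoped Classical

namespace BF
variable {G : SimpleGraph V} {C N M : Finset V} {σ : V → V} {x y : V} [Fintype V]

theorem Spart (h : BF G C N M σ x y) (S : Finset V) :
    (N ∩ S).card + ((C \ N) ∩ S).card + (Oo C x y ∩ S).card + (({x, y} : Finset V) ∩ S).card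
      ≤ S.card := by
  have hx := h.hx
  have hy := h.hy
  have hNC := h.NC
  rw [← Finset.card_union_of_disjoint, ← Finset.card_union_of_disjoint,
    ← Finset.card_union_of_disjoint]
  · apply Finset.card_le_card
    intro v hv
    simp only [Finset.mem_union, Finset.mem_inter] at hv
    tauto
  · rw [Finset.disjoint_left]
    intro v hv hv'
    simp only [Finset.mem_union, Finset.mem_inter, Finset.mem_sdiff, oo_mem, Finset.mem_insert,
      Finset.mem_singleton] at hv hv'
    have hvN : v ∈ N → v ∈ C := fun h => hNC h
    have hvx : v = x → v ∉ C := by rintro rfl; exact hx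
    have hvy : v = y → v ∉ C := by rintro rfl; exact hy
    tauto
  · rw [Finset.disjoint_left]
    intro v hv hv'
    simp only [Finset.mem_union, Finset.mem_inter, Finset.mem_sdiff, oo_mem] at hv hv'
    have hvN : v ∈ N → v ∈ C := fun h => hNC h
    tauto
  · rw [Finset.disjoint_left]
    intro v hv hv'
    simp only [Finset.mem_inter, Finset.mem_sdiff] at hv hv'
    tauto

theorem Npart {P Q S : Finset V} (hc : Cut G P Q S) :
    (N ∩ P).card + (N ∩ Q).card + (N ∩ S).card ≤ N.card := by
  rw [← Finset.card_union_of_disjoint, ← Finset.card_union_of_disjoint]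
  · apply Finset.card_le_card
    intro v hv
    simp only [Finset.mem_union, Finset.mem_inter] at hv
    tauto
  · rw [Finset.disjoint_left]
    intro v hv hv'
    simp only [Finset.mem_union, Finset.mem_inter] at hv hv'
    have := hc.ps v
    have := hc.qs v
    tauto
  · rw [Finset.disjoint_left]
    intro v hv hv'
    simp only [Finset.mem_inter] at hv hv'
    exact hc.pq v hv.2 hv'.2

theorem o_le_one (h : BF G C N M σ x y) {z : V} (hz : z ∈ Oo C x y) :
    ((Oo C x y).filter (G.Adj z)).card ≤ 1 := by
  rw [Finset.card_le_one]
  intro a ha b hb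
  rw [Finset.mem_filter, oo_mem] at ha hb
  rw [oo_mem] at hz
  exact h.p3 a z b ha.1.1 hz.1 hb.1.1 ha.2.symm hb.2

theorem caseB1 (h : BF G C N M σ x y) {δ κ : ℕ}
    (hδ : ∀ v, δ ≤ (Finset.univ.filter (G.Adj v)).card)
    {P Q S : Finset V} (hc : Cut G P Q S) (hS : S.card ≤ κ) (hxP : x ∈ P) (hyP : y ∈ P) :
    δ ≤ (Gd C N M σ).card + κ + 1 := by
  have hNQ : ∀ u ∈ N, u ∉ Q := by
    intro u hu hQ
    rcases (h.memN u (h.NC hu)).1 hu with h1 | h1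
    · exact hc.noedge _ hxP _ hQ h1.symm
    · exact hc.noedge _ hyP _ hQ h1.symm
  have hNQ0 : (N ∩ Q).card = 0 := by
    rw [Finset.card_eq_zero, Finset.eq_empty_iff_forall_notMem]
    intro v hv
    rw [Finset.mem_inter] at hv
    exact hNQ v hv.1 hv.2
  have hSp := h.Spart S
  by_cases hz : ∃ z ∈ Oo C x y, z ∈ Q
  · obtain ⟨z, hzO, hzQ⟩ := hz
    by_contra hlt
    push Not at hlt
    have ho := h.o_le_one hzO
    have hzO' := oo_mem.1 hzO
    have hb : ((Bd N M σ).filter (G.Adj z)).card ≤ 1 := by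
      have := h.bad1_out hzO'.1 hzO'.1 hzO'.2.1 hzO'.2.2 hzO'.2.1 hzO'.2.2 (.inl rfl)
      simpa using this
    have hd := h.degI hδ hc.symm hzQ (fun h' => hzO'.1 (h.NC h')) hzO'.2.1 hzO'.2.2
    have hg := Finset.card_filter_le (Gd C N M σ) (G.Adj z)
    have hsub : (N ∩ S).filter (G.Adj z) ⊆ S :=
      (Finset.filter_subset _ _).trans Finset.inter_subset_right
    have hs := Finset.card_le_card hsub
    have eS : (N ∩ S).filter (G.Adj z) = S := Finset.eq_of_subset_of_card_le hsub (by omega)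
    have eG : (Gd C N M σ).filter (G.Adj z) = Gd C N M σ :=
      Finset.eq_of_subset_of_card_le (Finset.filter_subset _ _) (by omega)
    have hSN : ∀ s ∈ S, s ∈ N ∧ G.Adj z s := by
      intro s hs
      rw [← eS, Finset.mem_filter, Finset.mem_inter] at hs
      exact ⟨hs.1.1, hs.2⟩
    have hGz : ∀ g ∈ Gd C N M σ, G.Adj z g := by
      intro g hg
      rw [← eG, Finset.mem_filter] at hg
      exact hg.2
    have hbpos : 0 < ((Bd N M σ).filter (G.Adj z)).card := by omega
    obtain ⟨v, hv⟩ := Finset.card_pos.1 hbpos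
    rw [Finset.mem_filter] at hv
    obtain ⟨hvC, hvN⟩ := h.bad_sub hv.1
    have hvQ : v ∈ Q := (hc.nbr' hzQ hv.2).resolve_right (fun h' => hvN (hSN v h').1)
    rcases bad_cases hv.1 with ⟨u, hu, hvu⟩ | ⟨u, hu, hvu⟩
    · have huC := h.NC hu
      have : u ∈ S := (hc.nbr' hvQ (hvu ▸ (h.σadj u huC).symm)).resolve_left (hNQ u hu)
      exact h.Z4 z z hzO'.1 hzO'.1 (.inl rfl) u huC (hSN u this).2 (hvu ▸ hv.2)
    · have hw := h.σadj v hvC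
      have hzw : ¬ G.Adj z (σ v) := h.Z4 z z hzO'.1 hzO'.1 (.inl rfl) v hvC hv.2
      rcases hc.nbr' hvQ hw with hwQ | hwS
      · apply hzw
        apply hGz
        rw [gd_mem]
        refine ⟨h.σC v hvC, fun h' => hNQ _ h' hwQ, fun hB => ?_⟩
        rcases bad_cases hB with ⟨a, ha, hva⟩ | ⟨a, ha, hva⟩
        · exact hvN (h.σinj _ (h.NC ha) _ hvC hva ▸ ha)
        · have haC := h.NC (h.MN ha)
          have e1 := h.σinj _ (h.σC _ haC) _ hvC hva
          have huC := h.NC (h.MN hu)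
          have e2 := h.σinj _ haC _ (h.σC _ huC) (e1.trans hvu.symm)
          exact h.F1 u (h.MN hu) (e2 ▸ h.MN ha)
      · exact hzw (hSN _ hwS).2
  · push Not at hz
    by_cases ht : ∃ u ∈ N, σ u ∈ Q
    · obtain ⟨u, hu, huQ⟩ := ht
      have := h.degT hδ hc.symm huQ (.inr ⟨u, hu, rfl⟩)
      have hsub : (Oo C x y).filter (G.Adj (σ u)) ⊆ Oo C x y ∩ S := by
        intro v hv
        rw [Finset.mem_filter] at hv
        rw [Finset.mem_inter]
        exact ⟨hv.1, (hc.nbr' huQ hv.2).resolve_left (hz v hv.1)⟩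
      have := Finset.card_le_card hsub
      have hg := Finset.card_filter_le (Gd C N M σ) (G.Adj (σ u))
      omega
    · push Not at ht
      obtain ⟨q, hq⟩ := hc.neQ
      have hqC : q ∈ C := by
        by_contra hqC
        refine hz q (oo_mem.2 ⟨hqC, ?_, ?_⟩) hq
        · rintro rfl; exact hc.pq _ hxP hq
        · rintro rfl; exact hc.pq _ hyP hq
      have := h.T2 hδ hc.symm hz ht ⟨q, hq, hqC, fun h' => hNQ q h' hq⟩
      have := Finset.card_le_card (Finset.inter_subset_left : Gd C N M σ ∩ Q ⊆ Gd C N M σ)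
      omega

theorem caseB23' (h : BF G C N M σ x y) {δ κ : ℕ}
    (hδ : ∀ v, δ ≤ (Finset.univ.filter (G.Adj v)).card)
    {P Q S : Finset V} (hc : Cut G P Q S) (hS : S.card ≤ κ) (hm : κ < M.card)
    (hE : ∀ a b, a ∉ C → b ∉ C → G.Adj a b → a ∈ S ∨ b ∈ S)
    {u : V} (hu : u ∈ N) (huQ : σ u ∈ Q) (huO : ∀ z ∈ Oo C x y, z ∈ S → ¬ G.Adj z (σ u)) :
    2 * δ ≤ (Gd C N M σ).card + N.card + κ + 2 := by
  have hSp := h.Spart S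
  have hNp := Npart (N := N) hc
  have hxyS : 1 ≤ (({x, y} : Finset V) ∩ S).card := by
    rw [Nat.succ_le_iff, Finset.card_pos]
    rcases hE x y h.hx h.hy h.hxy with h1 | h1
    · exact ⟨x, by simp [h1]⟩
    · exact ⟨y, by simp [h1]⟩
  obtain ⟨q, hq, hdq⟩ : ∃ q ∈ Q, δ ≤ ((Gd C N M σ).filter (G.Adj q)).card + 1 +
      (N ∩ Q).card + (N ∩ S).card + 1 := by
    by_cases hz : ∃ z ∈ Oo C x y, z ∈ Q
    · obtain ⟨z, hz, hzQ⟩ := hz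
      refine ⟨z, hzQ, ?_⟩
      have := h.degT hδ hc.symm hzQ (.inl hz)
      have := h.o_le_one hz
      omega
    · push Not at hz
      refine ⟨σ u, huQ, ?_⟩
      have := h.degT hδ hc.symm huQ (.inr ⟨u, hu, rfl⟩)
      have h0 : (Oo C x y).filter (G.Adj (σ u)) = ∅ := by
        rw [Finset.filter_eq_empty_iff]
        intro z hzO hzu
        exact huO z hzO ((hc.nbr' huQ hzu).resolve_left (hz z hzO)) hzu.symm
      rw [h0, Finset.card_empty] at this
      omega
  have hgs := Finset.card_le_card (good_side (N := N) (M := M) (C := C) (σ := σ) hc.symm hq)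
  -- a test vertex on the other side
  have test : ∀ p ∈ P, (p ∈ Oo C x y ∨ ∃ u ∈ N, σ u = p) →
      (Oo C x y).filter (G.Adj p) ⊆ Oo C x y ∩ S →
      2 * δ ≤ (Gd C N M σ).card + N.card + κ + 2 := by
    intro p hp ht ho
    have h1 := h.degT hδ hc hp ht
    have h2 := Finset.card_le_card ho
    have h3 : ((Gd C N M σ).filter (G.Adj q)).card + ((Gd C N M σ).filter (G.Adj p)).card ≤
        (Gd C N M σ).card + ((C \ N) ∩ S).card := by
      rw [← Finset.card_union_add_card_inter]
      apply Nat.add_le_add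
      · apply Finset.card_le_card
        exact Finset.union_subset (Finset.filter_subset _ _) (Finset.filter_subset _ _)
      · apply Finset.card_le_card
        intro v hv
        rw [Finset.mem_inter, Finset.mem_filter, Finset.mem_filter, gd_mem] at hv
        rw [Finset.mem_inter, Finset.mem_sdiff]
        refine ⟨⟨hv.1.1.1, hv.1.1.2.1⟩, ?_⟩
        have a1 := hc.nbr hp hv.2.2
        have a2 := hc.nbr' hq hv.1.2
        have a3 := hc.pq v
        tauto
    omega
  by_cases hz : ∃ z ∈ Oo C x y, z ∈ P
  · obtain ⟨z, hz, hzP⟩ := hz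
    refine test z hzP (.inl hz) ?_
    intro v hv
    rw [Finset.mem_filter] at hv
    rw [Finset.mem_inter]
    exact ⟨hv.1, (hE z v (oo_mem.1 hz).1 (oo_mem.1 hv.1).1 hv.2).resolve_left (hc.ps z hzP)⟩
  push Not at hz
  by_cases ht : ∃ u ∈ N, σ u ∈ P
  · obtain ⟨v, hv, hvP⟩ := ht
    refine test (σ v) hvP (.inr ⟨v, hv, rfl⟩) ?_
    intro w hw
    rw [Finset.mem_filter] at hw
    rw [Finset.mem_inter]
    exact ⟨hw.1, (hc.nbr hvP hw.2).resolve_left (hz w hw.1)⟩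
  push Not at ht
  by_cases hI : ∃ p ∈ P, p ∈ C ∧ p ∉ N
  · have h1 := h.T2 hδ hc hz ht hI
    have h3 : ((Gd C N M σ).filter (G.Adj q)).card + (Gd C N M σ ∩ P).card ≤
        (Gd C N M σ).card := by
      rw [← Finset.card_union_of_disjoint]
      · apply Finset.card_le_card
        exact Finset.union_subset (Finset.filter_subset _ _) Finset.inter_subset_left
      · rw [Finset.disjoint_left]
        intro v hv hv'
        rw [Finset.mem_filter] at hv
        rw [Finset.mem_inter] at hv'
        exact hc.noedge v hv'.2 q hq hv.2.symm
    omega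
  push Not at hI
  have hP : ∀ p ∈ P, p ∈ N ∨ p ∈ ({x, y} : Finset V) := by
    intro p hp
    by_cases hpC : p ∈ C
    · exact .inl (hI p hp hpC)
    · right
      have := hz p
      rw [oo_mem] at this
      rw [Finset.mem_insert, Finset.mem_singleton]
      tauto
  by_cases hN : ∃ p ∈ P, p ∈ N
  · obtain ⟨p, hp, hpN⟩ := hN
    have hsub : Finset.univ.filter (G.Adj p) ⊆ ((N ∩ P).erase p ∪ ({x, y} ∩ P)) ∪ S := by
      intro v hv
      rw [Finset.mem_filter] at hv
      have hne : v ≠ p := hv.2.ne'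
      rw [Finset.mem_union, Finset.mem_union, Finset.mem_erase, Finset.mem_inter, Finset.mem_inter]
      rcases hc.nbr hp hv.2 with h1 | h1
      · rcases hP v h1 with h2 | h2
        · exact .inl (.inl ⟨hne, h2, h1⟩)
        · exact .inl (.inr ⟨h2, h1⟩)
      · exact .inr h1
    have h1 := (hδ p).trans (Finset.card_le_card hsub)
    have h2 := Finset.card_union_le ((N ∩ P).erase p ∪ ({x, y} ∩ P)) S
    have h3 := Finset.card_union_le ((N ∩ P).erase p) ({x, y} ∩ P)
    have h4 : ((N ∩ P).erase p).card + 1 = (N ∩ P).card :=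
      Finset.card_erase_add_one (Finset.mem_inter.2 ⟨hpN, hp⟩)
    have h5 : (({x, y} : Finset V) ∩ P).card + (({x, y} : Finset V) ∩ S).card ≤ 2 := by
      rw [← Finset.card_union_of_disjoint]
      · refine (Finset.card_le_card (t := {x, y}) ?_).trans Finset.card_le_two
        exact Finset.union_subset Finset.inter_subset_left Finset.inter_subset_left
      · rw [Finset.disjoint_left]
        intro v hv hv'
        rw [Finset.mem_inter] at hv hv'
        exact hc.ps v hv.2 hv'.2
    have h6 := Finset.card_filter_le (Gd C N M σ) (G.Adj q)
    omega
  · exfalso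
    push Not at hN
    obtain ⟨p, hp⟩ := hc.neP
    have hpxy := (hP p hp).resolve_left (hN p hp)
    have : M ⊆ S := by
      intro v hv
      have hv2 := h.memM v hv
      have hpv : G.Adj p v := by
        rw [Finset.mem_insert, Finset.mem_singleton] at hpxy
        rcases hpxy with rfl | rfl
        · exact hv2.1.symm
        · exact hv2.2.symm
      exact (hc.nbr hp hpv).resolve_left (fun h' => hN v h' (h.MN hv))
    have := Finset.card_le_card this
    omega

theorem caseB23 (h : BF G C N M σ x y) {δ κ : ℕ}
    (hδ : ∀ v, δ ≤ (Finset.univ.filter (G.Adj v)).card)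
    {P Q S : Finset V} (hc : Cut G P Q S) (hS : S.card ≤ κ) (hm : κ < M.card)
    (hE : ∀ a b, a ∉ C → b ∉ C → G.Adj a b → a ∈ S ∨ b ∈ S) :
    2 * δ ≤ (Gd C N M σ).card + N.card + κ + 2 := by
  have hSp := h.Spart S
  have hMN := Finset.card_le_card h.MN
  have e2 : (N.filter (fun u => σ u ∈ S)).card ≤ ((C \ N) ∩ S).card := by
    apply Finset.card_le_card_of_injOn σ
    · intro u hu
      have hu := Finset.mem_filter.1 hu
      simp only [Finset.coe_inter, Finset.coe_sdiff, Set.mem_inter_iff, Set.mem_diff,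
        Finset.mem_coe]
      exact ⟨⟨h.σC _ (h.NC hu.1), h.F1 _ hu.1⟩, hu.2⟩
    · intro u hu v hv he
      exact h.σinj _ (h.NC (Finset.mem_filter.1 hu).1) _ (h.NC (Finset.mem_filter.1 hv).1) he
  have e3 : (N.filter (fun u => ∃ z, z ∈ Oo C x y ∩ S ∧ G.Adj z (σ u))).card ≤
      (Oo C x y ∩ S).card := by
    have : ∀ u, ∃ z, u ∈ N.filter (fun u => ∃ z, z ∈ Oo C x y ∩ S ∧ G.Adj z (σ u)) →
        z ∈ Oo C x y ∩ S ∧ G.Adj z (σ u) := by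
      intro u
      by_cases hu : u ∈ N.filter (fun u => ∃ z, z ∈ Oo C x y ∩ S ∧ G.Adj z (σ u))
      · obtain ⟨z, hz⟩ := (Finset.mem_filter.1 hu).2
        exact ⟨z, fun _ => hz⟩
      · exact ⟨u, fun h' => absurd h' hu⟩
    choose g hg using this
    apply Finset.card_le_card_of_injOn g
    · intro u hu
      exact (hg u hu).1
    · intro u hu v hv he
      by_contra hne
      have h1 := hg u hu
      have h2 := hg v hv
      have hz := oo_mem.1 (Finset.mem_inter.1 h1.1).1
      rw [← he] at h2
      exact h.Z1 (g u) (g u) hz.1 hz.1 hz.2.1 hz.2.2 hz.2.1 hz.2.2 (.inl rfl) u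
        (Finset.mem_filter.1 hu).1 v (Finset.mem_filter.1 hv).1 hne h1.2 h2.2
  obtain ⟨u, hu, h2, h3⟩ : ∃ u ∈ N, σ u ∉ S ∧ ¬ ∃ z, z ∈ Oo C x y ∩ S ∧ G.Adj z (σ u) := by
    by_contra hcon
    push Not at hcon
    have hsub : N ⊆ N.filter (fun u => σ u ∈ S) ∪
        N.filter (fun u => ∃ z, z ∈ Oo C x y ∩ S ∧ G.Adj z (σ u)) := by
      intro u hu
      rw [Finset.mem_union, Finset.mem_filter, Finset.mem_filter]
      by_cases hs : σ u ∈ S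
      · exact .inl ⟨hu, hs⟩
      · exact .inr ⟨hu, hcon u hu hs⟩
    have h1 := (Finset.card_le_card hsub).trans (Finset.card_union_le _ _)
    omega
  have huO : ∀ z ∈ Oo C x y, z ∈ S → ¬ G.Adj z (σ u) := fun z hz hzS ha =>
    h3 ⟨z, Finset.mem_inter.2 ⟨hz, hzS⟩, ha⟩
  rcases hc.cover (σ u) with h1 | h1 | h1
  · exact h.caseB23' hδ hc.symm hS hm hE hu h1 huO
  · exact h.caseB23' hδ hc hS hm hE hu h1 huO
  · exact absurd h1 h2

end BF

end

section
open scoped Classical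

theorem NoSep.of_conn [Fintype V] {G : SimpleGraph V} {k : ℕ} (h : KConnected G k) :
    NoSep G k := by
  intro S A hS hA hB
  obtain ⟨a, haA, haS⟩ := hA
  obtain ⟨b, hbA, hbS⟩ := hB
  have hc := (h.2 S hS).preconnected ⟨a, by simpa using haS⟩ ⟨b, by simpa using hbS⟩
  obtain ⟨p⟩ := hc
  obtain ⟨d, -, h1, h2⟩ := p.exists_boundary_dart {v | (v : V) ∈ A} haA hbA
  refine ⟨d.fst, d.snd, h1, h2, ?_, ?_, ?_⟩
  · exact fun hm => d.fst.2 (by simpa using hm)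
  · exact fun hm => d.snd.2 (by simpa using hm)
  · simpa using d.adj

theorem Cut.of_not_conn [Fintype V] {G : SimpleGraph V} {S : Finset V}
    (hS : S.card < Fintype.card V) (h : ¬ (G.induce ((↑S : Set V)ᶜ)).Connected) :
    ∃ P Q, Cut G P Q S := by
  have hne : Nonempty (((↑S : Set V)ᶜ : Set V)) := by
    by_contra hcon
    have : S = Finset.univ := by
      rw [Finset.eq_univ_iff_forall]
      intro v
      by_contra hv
      exact hcon ⟨⟨v, by simpa using hv⟩⟩
    rw [this, Finset.card_univ] at hS
    exact lt_irrefl _ hS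
  have hp : ¬ (G.induce ((↑S : Set V)ᶜ)).Preconnected := fun hp => h ⟨hp⟩
  unfold SimpleGraph.Preconnected at hp
  push Not at hp
  obtain ⟨a, b, hab⟩ := hp
  set R : V → Prop := fun v => ∃ hv : v ∈ ((↑S : Set V)ᶜ : Set V),
    (G.induce ((↑S : Set V)ᶜ)).Reachable a ⟨v, hv⟩ with hR
  refine ⟨Finset.univ.filter R, Finset.univ.filter (fun v => v ∉ S ∧ ¬ R v), ?_⟩
  refine ⟨?_, ?_, ?_, ?_, ?_, ?_, ?_⟩
  · intro v hv hv'
    rw [Finset.mem_filter] at hv hv'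
    exact hv'.2.2 hv.2
  · intro v hv
    rw [Finset.mem_filter] at hv
    obtain ⟨h1, -⟩ := hv.2
    simpa using h1
  · intro v hv
    rw [Finset.mem_filter] at hv
    exact hv.2.1
  · intro v
    simp only [Finset.mem_filter, Finset.mem_univ, true_and]
    tauto
  · intro p hp q hq hpq
    rw [Finset.mem_filter] at hp hq
    apply hq.2.2
    obtain ⟨h1, h2⟩ := hp.2
    refine ⟨by simpa using hq.2.1, h2.trans (SimpleGraph.Adj.reachable ?_)⟩
    simpa using hpq
  · exact ⟨a, Finset.mem_filter.2 ⟨Finset.mem_univ _, a.2, SimpleGraph.Reachable.refl _⟩⟩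
  · refine ⟨b, Finset.mem_filter.2 ⟨Finset.mem_univ _, fun hb => b.2 (by simpa using hb), ?_⟩⟩
    rintro ⟨h1, h2⟩
    exact hab h2

theorem conn_spec [Fintype V] {G : SimpleGraph V} {k : ℕ} (h : KConnected G k) :
    k ≤ connectivity G ∧ ¬ KConnected G (connectivity G + 1) := by
  have hb : BddAbove {k | KConnected G k} := ⟨Fintype.card V, fun k hk => hk.1.le⟩
  refine ⟨le_csSup hb h, fun h' => ?_⟩
  have := le_csSup hb h'
  unfold connectivity at this
  omega

theorem partB [Fintype V] {G : SimpleGraph V} {f : ℕ → V} {c δ : ℕ} (h : LC G f c)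
    (h4 : KConnected G 4) (hδ : ∀ v, δ ≤ (Finset.univ.filter (G.Adj v)).card)
    {x y : V} (hx : x ∉ Cs f c) (hy : y ∉ Cs f c) (hxy : G.Adj x y)
    (p3 : ∀ a b d, a ∉ Cs f c → b ∉ Cs f c → d ∉ Cs f c → G.Adj a b → G.Adj b d → a = d) :
    4 * δ ≤ c + connectivity G + 4 := by
  obtain ⟨hκ, hnc⟩ := conn_spec h4
  set κ := connectivity G with hκd
  obtain ⟨σ, hσ⟩ := h.exists_succ
  have hdeg : ∀ x y, x ∉ Cs f c → y ∉ Cs f c → G.Adj x y →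
      δ ≤ ((Cs f c).filter (G.Adj x)).card + 1 := by
    intro x y hx hy hxy
    have hsub : Finset.univ.filter (G.Adj x) ⊆ (Cs f c).filter (G.Adj x) ∪ {y} := by
      intro v hv
      rw [Finset.mem_filter] at hv
      rw [Finset.mem_union, Finset.mem_filter, Finset.mem_singleton]
      by_cases hvC : v ∈ Cs f c
      · exact .inl ⟨hvC, hv.2⟩
      · exact .inr (p3 v x y hvC hx hy hv.2.symm hxy)
    have := (hδ x).trans ((Finset.card_le_card hsub).trans (Finset.card_union_le _ _))
    simpa using this
  have hNM : ∀ x y, x ∉ Cs f c → y ∉ Cs f c → G.Adj x y →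
      2 * δ ≤ ((Cs f c).filter (G.Adj x) ∪ (Cs f c).filter (G.Adj y)).card +
        ((Cs f c).filter (G.Adj x) ∩ (Cs f c).filter (G.Adj y)).card + 2 := by
    intro x y hx hy hxy
    have h1 := hdeg x y hx hy hxy
    have h2 := hdeg y x hy hx hxy.symm
    rw [Finset.card_union_add_card_inter]
    omega
  have hcC : (Cs f c).card = c := h.card_Cs
  have hB := h.BF hσ hx hy hxy p3
  have hcount := hB.count
  have hnm := hNM x y hx hy hxy
  have hmn := Finset.card_le_card hB.MN
  rw [hcC] at hcount
  by_cases hm : ((Cs f c).filter (G.Adj x) ∩ (Cs f c).filter (G.Adj y)).card ≤ κ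
  · omega
  push Not at hm
  -- a minimum cut
  have hcard : κ + 1 < Fintype.card V := by
    have h1 : (Cs f c ∪ {x}).card ≤ Fintype.card V := Finset.card_le_univ _
    rw [Finset.card_union_of_disjoint (by simpa using hx), hcC, Finset.card_singleton] at h1
    omega
  have hS : ∃ S : Finset V, S.card ≤ κ ∧ ¬ (G.induce ((↑S : Set V)ᶜ)).Connected := by
    by_contra hcon
    push Not at hcon
    exact hnc ⟨hcard, fun S hS => hcon S (by omega)⟩
  obtain ⟨S, hSk, hSc⟩ := hS
  obtain ⟨P, Q, hc⟩ := Cut.of_not_conn (by omega) hSc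
  by_cases hE : ∀ a b, a ∉ Cs f c → b ∉ Cs f c → G.Adj a b → a ∈ S ∨ b ∈ S
  · have := hB.caseB23 hδ hc hSk hm hE
    omega
  · push Not at hE
    obtain ⟨a, b, ha, hb, hab, haS, hbS⟩ := hE
    have hB' := h.BF hσ ha hb hab p3
    have hcount' := hB'.count
    have hnm' := hNM a b ha hb hab
    have hmn' := Finset.card_le_card hB'.MN
    rw [hcC] at hcount'
    rcases hc.cover a with h1 | h1 | h1
    · have := hB'.caseB1 hδ hc hSk h1 ((hc.nbr h1 hab).resolve_right hbS)
      omega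
    · have := hB'.caseB1 hδ hc.symm hSk h1 ((hc.nbr' h1 hab).resolve_right hbS)
      omega
    · exact absurd h1 haS

theorem main_bound [Fintype V] {G : SimpleGraph V} {δ : ℕ} (h4 : KConnected G 4)
    (hδ : ∀ v, δ ≤ (Finset.univ.filter (G.Adj v)).card) {v : V} (w : G.Walk v v)
    (hw : IsLongestCycle w) (hd : ¬ IsDominatingCycle w) :
    4 * δ ≤ circumference G + connectivity G + 4 := by
  have hcirc : circumference G = w.length := circ_eq w hw.1 hw.2
  obtain ⟨f, hf, hsup⟩ := exists_LC w hw.1 hw.2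
  have hout : ∀ u, u ∉ w.support ↔ u ∉ Cs f w.length := by
    intro u
    rw [hf.mem_Cs, hsup]
  unfold IsDominatingCycle at hd
  push Not at hd
  obtain ⟨x, y, hxy, hx, hy⟩ := hd hw.1
  rw [hout] at hx hy
  rw [hcirc]
  by_cases p3 : ∀ a b d, a ∉ Cs f w.length → b ∉ Cs f w.length → d ∉ Cs f w.length →
      G.Adj a b → G.Adj b d → a = d
  · exact partB hf h4 hδ hx hy hxy p3
  · push Not at p3
    obtain ⟨a, b, d, ha, hb, hd, hab, hbd, had⟩ := p3
    have := partA hf (NoSep.of_conn h4) hδ ha hb hd hab hbd had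
    have := (conn_spec h4).1
    omega

end

theorem nikoghosyan_2011_longest_dominating (G : SimpleGraph V) [Fintype V] [DecidableRel G.Adj]
    (h4 : KConnected G 4) :
    (circumference G : ℤ) ≥ 4 * G.minDegree - connectivity G - 4 ∨
      ∀ (v : V) (w : G.Walk v v), IsLongestCycle w → IsDominatingCycle w := by
  by_contra hcon
  push Not at hcon
  obtain ⟨h1, v, w, hw, hd⟩ := hcon
  have := main_bound (δ := G.minDegree) h4 (fun v => by
    have := G.minDegree_le_degree v
    rw [← G.card_neighborFinset_eq_degree, G.neighborFinset_eq_filter] at this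
    convert this) w hw hd
  omega
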